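/- For every integer r ≥ 2, there is a constant K = K(r) > 0 such that the following holds. Let W ⊆ [n] be a fixed set of at most n/(100r)^4 vertices, and let G ~ G(n,p) where p = p(n) ≫ (log n / n)^{1/2}. Then with high probability, for every r-coloring of the edges of G, there is a collection of 3r^2 vertex-disjoint monochromatic cycles that cover all but at most K/p vertices of W. -/

import Mathlib

open MeasureTheory Filter

noncomputable def bernoulliM (q : ℝ) : Measure Bool :=
  ENNReal.ofReal q • Measure.dirac true + ENNReal.ofReal (1 - q) • Measure.dirac false

noncomputable def gnp (n : ℕ) (q : ℝ) : Measure (Sym2 (Fin n) → Bool) :=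
  Measure.pi fun _ => bernoulliM q

def graphOf {n : ℕ} (ω : Sym2 (Fin n) → Bool) : SimpleGraph (Fin n) :=
  SimpleGraph.fromRel (fun u v => ω s(u, v))

def IsMonoCycle {V ι : Type*} (G : SimpleGraph V) (c : Sym2 V → ι) (i : ι) (S : Set V) : Prop :=
  (∃ v, S = {v}) ∨
  (∃ u v, G.Adj u v ∧ c s(u, v) = i ∧ S = {u, v}) ∨
  (∃ (v : V) (w : G.Walk v v), w.IsCycle ∧ (∀ e ∈ w.edges, c e = i) ∧ S = {x | x ∈ w.support})



/-- x is joined to the list P by a path inside A -/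
def ConnTo {V : Type*} (H : SimpleGraph V) (A : Finset V) (P : List V) (x : V) : Prop :=
  ∃ q : List V, (∀ z ∈ x :: q, z ∈ A) ∧ (x :: q).Nodup ∧ List.IsChain H.Adj ((x :: q) ++ P)

theorem ConnTo.suffix {V : Type*} {H : SimpleGraph V} {A : Finset V} {P : List V}
    {l : List V} (h1 : ∀ z ∈ l, z ∈ A) (h2 : l.Nodup) (h3 : List.IsChain H.Adj (l ++ P))
    {z : V} (hz : z ∈ l) : ConnTo H A P z := by
  obtain ⟨l1, l2, rfl⟩ := List.append_of_mem hz
  refine ⟨l2, fun y hy => h1 y (List.mem_append_right _ hy), (List.nodup_append.1 h2).2.1, ?_⟩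
  rw [List.append_assoc] at h3
  exact h3.right_of_append

theorem ConnTo.step {V : Type*} {H : SimpleGraph V} {A : Finset V} {P : List V}
    {x y : V} (hx : x ∈ A) (hxy : H.Adj x y) (h : ConnTo H A P y) : ConnTo H A P x := by
  obtain ⟨q, h1, h2, h3⟩ := h
  by_cases hm : x ∈ y :: q
  · exact ConnTo.suffix h1 h2 h3 hm
  · refine ⟨y :: q, ?_, List.nodup_cons.2 ⟨hm, h2⟩, ?_⟩
    · intro z hz
      rcases List.mem_cons.1 hz with rfl | hz
      · exact hx
      · exact h1 z hz
    · exact List.IsChain.cons_cons hxy h3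

structure PState {V : Type*} (H : SimpleGraph V) (Z : Finset V) (P : List V) (A : Finset V) :
    Prop where
  AZ : A ⊆ Z
  PZ : ∀ x ∈ P, x ∈ Z
  disj : ∀ x ∈ P, x ∉ A
  nd : P.Nodup
  ch : List.IsChain H.Adj P
  nb : ∀ x ∈ A, ∀ y ∈ Z, H.Adj x y → y ∈ A ∨ y ∈ P
  conn : ∀ x ∈ A, ConnTo H A P x

theorem PState.split {V : Type*} [DecidableEq V] {H : SimpleGraph V} {Z : Finset V} {P : List V}
    {A : Finset V} (h : PState H Z P A) (hA : A.Nonempty) :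
    ∃ a ∈ A, ∃ B R : Finset V, A = insert a (B ∪ R) ∧ a ∉ B ∧ a ∉ R ∧ Disjoint B R ∧
      PState H Z (a :: P) B ∧ PState H Z P R := by
  classical
  obtain ⟨a, ha, hch⟩ : ∃ a ∈ A, List.IsChain H.Adj (a :: P) := by
    obtain ⟨x, hx⟩ := hA
    obtain ⟨q, h1, h2, h3⟩ := h.conn x hx
    refine ⟨(x :: q).getLast (by simp), h1 _ (List.getLast_mem _), ?_⟩
    have := List.dropLast_append_getLast (l := x :: q) (by simp)
    rw [← this, List.append_assoc] at h3
    exact h3.right_of_append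
  have haP : a ∉ P := fun hp => h.disj a hp ha
  set B := (A.erase a).filter (fun x => ConnTo H (A.erase a) (a :: P) x) with hB
  set R := (A.erase a) \ B with hR
  have hBm : ∀ x, x ∈ B ↔ x ∈ A.erase a ∧ ConnTo H (A.erase a) (a :: P) x := by
    intro x; simp [hB]
  have hBR : B ∪ R = A.erase a := by
    rw [hR]; exact Finset.union_sdiff_of_subset (Finset.filter_subset _ _)
  have hadj : ∀ x ∈ A.erase a, ∀ y, (y = a ∨ y ∈ B) → H.Adj x y → x ∈ B := by
    intro x hx y hy hxy
    rw [hBm]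
    refine ⟨hx, ?_⟩
    rcases hy with rfl | hy
    · exact ⟨[], by simpa using hx, by simp, List.IsChain.cons_cons hxy hch⟩
    · exact ConnTo.step hx hxy ((hBm y).1 hy).2
  refine ⟨a, ha, B, R, ?_, ?_, ?_, ?_, ?_, ?_⟩
  · rw [hBR, Finset.insert_erase ha]
  · simp [hB]
  · simp [hR]
  · exact Finset.disjoint_sdiff
  · refine ⟨?_, ?_, ?_, ?_, hch, ?_, ?_⟩
    · intro x hx; exact h.AZ (Finset.mem_of_mem_erase ((hBm x).1 hx).1)
    · intro x hx
      rcases List.mem_cons.1 hx with rfl | hx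
      · exact h.AZ ha
      · exact h.PZ x hx
    · intro x hx hxB
      have := ((hBm x).1 hxB).1
      rcases List.mem_cons.1 hx with rfl | hx
      · simp at this
      · exact h.disj x hx (Finset.mem_of_mem_erase this)
    · exact List.nodup_cons.2 ⟨haP, h.nd⟩
    · intro x hx y hy hxy
      have hxA := ((hBm x).1 hx).1
      rcases h.nb x (Finset.mem_of_mem_erase hxA) y hy hxy with hyA | hyP
      · by_cases hya : y = a
        · right; simp [hya]
        · left
          exact hadj y (Finset.mem_erase.2 ⟨hya, hyA⟩) x (Or.inr hx) hxy.symm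
      · right; simp [hyP]
    · intro x hx
      obtain ⟨q, h1, h2, h3⟩ := ((hBm x).1 hx).2
      refine ⟨q, ?_, h2, h3⟩
      intro z hz
      rw [hBm]
      exact ⟨h1 z hz, ConnTo.suffix h1 h2 h3 hz⟩
  · have hRA : R ⊆ A.erase a := Finset.sdiff_subset
    refine ⟨?_, h.PZ, ?_, h.nd, h.ch, ?_, ?_⟩
    · intro x hx; exact h.AZ (Finset.mem_of_mem_erase (hRA hx))
    · intro x hx hxR
      exact h.disj x hx (Finset.mem_of_mem_erase (hRA hxR))
    · intro x hx y hy hxy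
      have hxB : x ∉ B := (Finset.mem_sdiff.1 hx).2
      rcases h.nb x (Finset.mem_of_mem_erase (hRA hx)) y hy hxy with hyA | hyP
      · left
        have hya : y ≠ a := fun e => hxB (hadj x (hRA hx) y (Or.inl e) hxy)
        have hyB : y ∉ B := fun e => hxB (hadj x (hRA hx) y (Or.inr e) hxy)
        exact Finset.mem_sdiff.2 ⟨Finset.mem_erase.2 ⟨hya, hyA⟩, hyB⟩
      · right; exact hyP
    · intro x hx
      obtain ⟨q, h1, h2, h3⟩ := h.conn x (Finset.mem_of_mem_erase (hRA hx))
      refine ⟨q, ?_, h2, h3⟩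
      have key : ∀ (q : List V) (x : V), x ∈ R → (∀ z ∈ q, z ∈ A) →
          List.IsChain H.Adj (x :: q) → ∀ z ∈ x :: q, z ∈ R := by
        intro q
        induction q with
        | nil => intro x hx _ _ z hz; simp at hz; rwa [hz]
        | cons y q ih =>
          intro x hx hq hc z hz
          rcases List.mem_cons.1 hz with rfl | hz
          · exact hx
          · rw [List.isChain_cons_cons] at hc
            have hxB : x ∉ B := (Finset.mem_sdiff.1 hx).2
            have hya : y ≠ a := fun e => hxB (hadj x (hRA hx) y (Or.inl e) hc.1)
            have hyB : y ∉ B := fun e => hxB (hadj x (hRA hx) y (Or.inr e) hc.1)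
            exact ih y (Finset.mem_sdiff.2 ⟨Finset.mem_erase.2 ⟨hya, hq y (by simp)⟩, hyB⟩)
              (fun z hz => hq z (by simp [hz])) hc.2 z hz
      exact key q x hx (fun z hz => h1 z (by simp [hz])) h3.left_of_append

theorem PState.exists_small {V : Type*} [DecidableEq V] (H : SimpleGraph V) (Z : Finset V)
    (k : ℕ) (hk : 1 ≤ k) (hZ : k ≤ Z.card) :
    ∃ P A, PState H Z P A ∧ k ≤ A.card ∧ A.card ≤ 2 * k := by
  have key : ∀ m, ∀ P A, PState H Z P A → k ≤ A.card → A.card ≤ m →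
      ∃ P A, PState H Z P A ∧ k ≤ A.card ∧ A.card ≤ 2 * k := by
    intro m
    induction m with
    | zero => intro P A _ h1 h2; omega
    | succ m ih =>
      intro P A h h1 h2
      by_cases h3 : A.card ≤ 2 * k
      · exact ⟨P, A, h, h1, h3⟩
      obtain ⟨a, ha, B, R, e, haB, haR, hd, hSB, hSR⟩ :=
        h.split (Finset.card_pos.1 (by omega))
      have hc : A.card = B.card + R.card + 1 := by
        rw [e, Finset.card_insert_of_notMem (by simp [haB, haR]), Finset.card_union_of_disjoint hd]
      by_cases hB : k ≤ B.card
      · exact ih _ _ hSB hB (by omega)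
      · exact ih _ _ hSR (by omega) (by omega)
  refine key Z.card [] Z ⟨subset_rfl, by simp, by simp, by simp, by simp, ?_, ?_⟩ hZ le_rfl
  · intro x _ y hy _; exact Or.inl hy
  · intro x hx; exact ⟨[], by simpa using hx, by simp, by simp⟩

/-- auxiliary cycles: singletons or lists of length ≥ 3 with cyclic adjacency -/
def IsCyc {V : Type*} (H : SimpleGraph V) (l : List V) : Prop :=
  l.length = 1 ∨ (3 ≤ l.length ∧ List.IsChain H.Adj l ∧
    ∀ x ∈ l.getLast?, ∀ y ∈ l.head?, H.Adj x y)

theorem last_split {V : Type*} (p : V → Prop) (P : List V) (h : ∃ x ∈ P, p x) :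
    ∃ P1 y P2, P = P1 ++ y :: P2 ∧ p y ∧ ∀ z ∈ P2, ¬ p z := by
  induction P with
  | nil => simp at h
  | cons a P ih =>
    by_cases h' : ∃ x ∈ P, p x
    · obtain ⟨P1, y, P2, e, h1, h2⟩ := ih h'
      exact ⟨a :: P1, y, P2, by simp [e], h1, h2⟩
    · push Not at h'
      obtain ⟨x, hx, hpx⟩ := h
      rcases List.mem_cons.1 hx with rfl | hx
      · exact ⟨[], x, P, rfl, hpx, h'⟩
      · exact absurd hpx (h' x hx)

theorem PState.cyc {V : Type*} [DecidableEq V] {H : SimpleGraph V} {Z : Finset V} {P : List V}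
    {A : Finset V} (h : PState H Z P A) :
    ∃ L : List (List V), L.length ≤ 1 ∧ L.flatten.Nodup ∧ (∀ x ∈ L.flatten, x ∈ Z) ∧
      (∀ l ∈ L, IsCyc H l) ∧
      ∀ x ∈ A, ∀ y ∈ Z, H.Adj x y → y ∈ A ∨ y ∈ L.flatten := by
  by_cases hP : ∃ y ∈ P, ∃ x ∈ A, H.Adj x y
  · obtain ⟨P1, y, P2, e, ⟨x, hx, hxy⟩, hP2⟩ := last_split (fun y => ∃ x ∈ A, H.Adj x y) P hP
    obtain ⟨q, h1, h2, h3⟩ := h.conn x hx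
    have hnb : ∀ x ∈ A, ∀ z ∈ Z, H.Adj x z → z ∈ A ∨ z ∈ P1 ++ [y] := by
      intro x hx z hz hxz
      rcases h.nb x hx z hz hxz with hh | hh
      · exact Or.inl hh
      · right
        rw [e] at hh
        have : z ∉ P2 := fun hz2 => hP2 z hz2 ⟨x, hx, hxz⟩
        simp at hh ⊢
        tauto
    have hPZ := h.PZ
    have hPd := h.disj
    have hPn := h.nd
    by_cases hlen : q = [] ∧ P1 = []
    · refine ⟨[[y]], by simp, by simp, ?_, ?_, ?_⟩
      · intro z hz; simp at hz; subst hz; exact hPZ _ (by simp [e])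
      · intro l hl; simp at hl; left; simp [hl]
      · intro x hx z hz hxz
        have := hnb x hx z hz hxz
        simpa [hlen.2] using this
    · have hl3 : 3 ≤ ((x :: q) ++ (P1 ++ [y])).length := by
        simp only [List.length_append, List.length_cons, List.length_nil]
        by_contra hcon
        apply hlen
        rw [← List.length_eq_zero_iff, ← List.length_eq_zero_iff]
        omega
      refine ⟨[(x :: q) ++ (P1 ++ [y])], by simp, ?_, ?_, ?_, ?_⟩
      · simp only [List.flatten_cons, List.flatten_nil, List.append_nil]
        rw [List.nodup_append]
        refine ⟨h2, ?_, ?_⟩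
        · rw [e, ← List.singleton_append, ← List.append_assoc] at hPn
          exact (List.nodup_append.1 hPn).1
        · intro a ha b hb hab
          subst hab
          exact hPd a (by rw [e]; simp at hb ⊢; tauto) (h1 a ha)
      · intro z hz
        simp only [List.flatten_cons, List.flatten_nil, List.append_nil] at hz
        rcases List.mem_append.1 hz with hz | hz
        · exact h.AZ (h1 z hz)
        · exact hPZ z (by rw [e]; simp at hz ⊢; tauto)
      · intro l hl
        simp only [List.mem_singleton] at hl
        subst hl
        right
        refine ⟨hl3, ?_, ?_⟩
        · rw [e, ← List.singleton_append (l := P2), ← List.append_assoc P1, ← List.append_assoc] at h3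
          exact h3.left_of_append
        · intro a ha b hb
          rw [Option.mem_def, ← List.append_assoc, List.getLast?_concat] at ha
          simp at ha hb
          subst ha; subst hb
          exact hxy.symm
      · intro a ha z hz haz
        rcases hnb a ha z hz haz with hh | hh
        · exact Or.inl hh
        · right
          simp only [List.flatten_cons, List.flatten_nil, List.append_nil]
          exact List.mem_append_right _ hh
  · refine ⟨[], by simp, by simp, by simp, by simp, ?_⟩
    intro x hx y hy hxy
    rcases h.nb x hx y hy hxy with hh | hh
    · exact Or.inl hh
    · exact absurd ⟨y, hh, x, hx, hxy⟩ hP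

def NoSep {V : Type*} (H : SimpleGraph V) (k s : ℕ) (Z : Finset V) : Prop :=
  ¬ ∃ B : Fin s → Finset V, (∀ i, B i ⊆ Z ∧ (B i).card = k) ∧
    ∀ i j, i ≠ j → Disjoint (B i) (B j) ∧ ∀ x ∈ B i, ∀ y ∈ B j, ¬ H.Adj x y

theorem aux_cycles {V : Type*} [DecidableEq V] (H : SimpleGraph V) (k : ℕ) (hk : 1 ≤ k) :
    ∀ (s : ℕ) (Z : Finset V), NoSep H k (s + 1) Z →
    ∃ L : List (List V), L.length ≤ s ∧ L.flatten.Nodup ∧ (∀ x ∈ L.flatten, x ∈ Z) ∧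
      (∀ l ∈ L, IsCyc H l) ∧ (Z \ L.flatten.toFinset).card ≤ 2 * k * (s + 1) := by
  intro s
  induction s with
  | zero =>
    intro Z h
    refine ⟨[], by simp, by simp, by simp, by simp, ?_⟩
    by_contra hcon
    simp at hcon
    obtain ⟨B, hB, hBk⟩ := Finset.exists_subset_card_eq (show k ≤ Z.card by omega)
    apply h
    refine ⟨fun _ => B, fun i => ⟨hB, hBk⟩, fun i j hij => absurd (Fin.ext (by omega)) hij⟩
  | succ s ih =>
    intro Z h
    by_cases hZ : Z.card < k
    · refine ⟨[], by simp, by simp, by simp, by simp, ?_⟩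
      simp
      nlinarith
    push Not at hZ
    obtain ⟨P, A, hS, hA1, hA2⟩ := PState.exists_small H Z k hk hZ
    obtain ⟨L0, h01, h02, h03, h04, h05⟩ := hS.cyc
    obtain ⟨A', hA', hA'k⟩ := Finset.exists_subset_card_eq hA1
    set Z' := (Z \ A) \ L0.flatten.toFinset with hZ'
    have hZ'm : ∀ x, x ∈ Z' ↔ (x ∈ Z ∧ x ∉ A) ∧ x ∉ L0.flatten := by
      intro x; rw [hZ', Finset.mem_sdiff, Finset.mem_sdiff, List.mem_toFinset]
    have hNo : NoSep H k (s + 1) Z' := by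
      rintro ⟨B, hB1, hB2⟩
      apply h
      have hAB : ∀ i, Disjoint A' (B i) ∧ ∀ x ∈ A', ∀ y ∈ B i, ¬ H.Adj x y := by
        intro i
        constructor
        · rw [Finset.disjoint_left]
          intro x hx hx2
          exact ((hZ'm x).1 ((hB1 i).1 hx2)).1.2 (hA' hx)
        · intro x hx y hy hxy
          have hy' := (hZ'm y).1 ((hB1 i).1 hy)
          rcases h05 x (hA' hx) y hy'.1.1 hxy with hh | hh
          · exact hy'.1.2 hh
          · exact hy'.2 hh
      refine ⟨Fin.cons A' B, ?_, ?_⟩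
      · intro i
        refine Fin.cases ?_ (fun i => ?_) i
        · exact ⟨hA'.trans hS.AZ, hA'k⟩
        · exact ⟨fun x hx => ((hZ'm x).1 ((hB1 i).1 hx)).1.1, (hB1 i).2⟩
      · intro i j
        refine Fin.cases ?_ (fun i => ?_) i <;> refine Fin.cases ?_ (fun j => ?_) j
        · intro hh; exact absurd rfl hh
        · intro _; exact hAB j
        · intro _
          simp only [Fin.cons_succ, Fin.cons_zero]
          exact ⟨(hAB i).1.symm, fun x hx y hy hxy => (hAB i).2 y hy x hx hxy.symm⟩
        · intro hij
          simp only [Fin.cons_succ]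
          exact hB2 i j (fun e => hij (by rw [e]))
    obtain ⟨L, h1, h2, h3, h4, h5⟩ := ih Z' hNo
    refine ⟨L0 ++ L, ?_, ?_, ?_, ?_, ?_⟩
    · simp; omega
    · rw [List.flatten_append, List.nodup_append]
      refine ⟨h02, h2, ?_⟩
      intro a ha b hb hab
      subst hab
      exact ((hZ'm a).1 (h3 a hb)).2 ha
    · intro x hx
      rw [List.flatten_append, List.mem_append] at hx
      rcases hx with hx | hx
      · exact h03 x hx
      · exact ((hZ'm x).1 (h3 x hx)).1.1
    · intro l hl
      rcases List.mem_append.1 hl with hl | hl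
      · exact h04 l hl
      · exact h4 l hl
    · have : Z \ (L0 ++ L).flatten.toFinset ⊆ A ∪ (Z' \ L.flatten.toFinset) := by
        intro x hx
        rw [Finset.mem_sdiff, List.mem_toFinset, List.flatten_append, List.mem_append] at hx
        rw [Finset.mem_union, Finset.mem_sdiff, hZ'm, List.mem_toFinset]
        tauto
      calc _ ≤ _ := Finset.card_le_card this
        _ ≤ _ := Finset.card_union_le _ _
        _ ≤ 2 * k + 2 * k * (s + 1) := by omega
        _ = _ := by ring

theorem bern_prob {q : ℝ} (h0 : 0 ≤ q) (h1 : q ≤ 1) : IsProbabilityMeasure (bernoulliM q) := by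
  constructor
  simp only [bernoulliM, Measure.add_apply, Measure.smul_apply, measure_univ, smul_eq_mul, mul_one]
  rw [← ENNReal.ofReal_add h0 (by linarith)]
  simp

theorem gnp_prob {n : ℕ} {q : ℝ} (h0 : 0 ≤ q) (h1 : q ≤ 1) : IsProbabilityMeasure (gnp n q) := by
  have := bern_prob h0 h1
  unfold gnp
  infer_instance

theorem gnp_meas {n : ℕ} (s : Set (Sym2 (Fin n) → Bool)) : MeasurableSet s :=
  s.toFinite.measurableSet

theorem bern_integral {q : ℝ} (h0 : 0 ≤ q) (h1 : q ≤ 1) (f : Bool → ℝ) :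
    ∫ x, f x ∂(bernoulliM q) = q * f true + (1 - q) * f false := by
  have := bern_prob h0 h1
  rw [integral_fintype (Integrable.of_finite)]
  have ht : (bernoulliM q).real {true} = q := by
    simp [Measure.real, bernoulliM, h0]
  have hf : (bernoulliM q).real {false} = 1 - q := by
    simp [Measure.real, bernoulliM, h1]
  simp [ht, hf]

theorem gnp_prod {n : ℕ} {q : ℝ} (h0 : 0 ≤ q) (h1 : q ≤ 1) (F : Finset (Sym2 (Fin n))) :
    ∫ ω, (if ∀ e ∈ F, ω e = true then (1 : ℝ) else 0) ∂(gnp n q) = q ^ F.card := by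
  have := bern_prob h0 h1
  have : ∀ ω : Sym2 (Fin n) → Bool, (if ∀ e ∈ F, ω e = true then (1 : ℝ) else 0) =
      ∏ e, (if e ∈ F then (if ω e = true then (1 : ℝ) else 0) else 1) := by
    intro ω
    rw [Finset.prod_ite_mem, Finset.univ_inter, Finset.prod_ite_zero]
    simp
  simp_rw [this]
  unfold gnp
  rw [integral_fintype_prod_eq_prod (𝕜 := ℝ)
    (f := fun e (b : Bool) => if e ∈ F then (if b = true then (1 : ℝ) else 0) else 1)]
  refine (Finset.prod_congr rfl (g := fun e => if e ∈ F then q else 1) ?_).trans ?_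
  · intro e _
    rw [bern_integral h0 h1]
    by_cases he : e ∈ F <;> simp [he]
  rw [Finset.prod_ite_mem, Finset.univ_inter, Finset.prod_const]

theorem gnp_mgf {n : ℕ} {q : ℝ} (h0 : 0 ≤ q) (h1 : q ≤ 1) {ι : Type*}
    (S : Finset ι) (F : ι → Finset (Sym2 (Fin n))) (d : ℕ)
    (hd : ∀ i ∈ S, (F i).card = d) (hdis : (S : Set ι).PairwiseDisjoint F) (θ : ℝ) :
    ∫ ω, ∏ i ∈ S, (1 + θ * (if ∀ e ∈ F i, ω e = true then (1 : ℝ) else 0)) ∂(gnp n q)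
      = (1 + θ * q ^ d) ^ S.card := by
  classical
  have := gnp_prob (n := n) h0 h1
  simp_rw [Finset.prod_one_add]
  rw [integral_finsetSum _ (fun i _ => Integrable.of_finite)]
  have : ∀ T ∈ S.powerset, ∫ ω, ∏ i ∈ T, (θ * (if ∀ e ∈ F i, ω e = true then (1 : ℝ) else 0))
      ∂(gnp n q) = ∏ i ∈ T, (θ * q ^ d) := by
    intro T hT
    have hTS := Finset.mem_powerset.1 hT
    have e1 : ∀ ω : Sym2 (Fin n) → Bool,
        ∏ i ∈ T, (θ * (if ∀ e ∈ F i, ω e = true then (1 : ℝ) else 0)) =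
        θ ^ T.card * (if ∀ e ∈ T.biUnion F, ω e = true then (1 : ℝ) else 0) := by
      intro ω
      rw [Finset.prod_mul_distrib, Finset.prod_const, Finset.prod_ite_zero]
      congr 1
      simp only [Finset.prod_const_one]
      congr 1
      simp only [Finset.mem_biUnion, eq_iff_iff]
      constructor
      · rintro h e ⟨i, hi, he⟩; exact h i hi e he
      · intro h i hi e he; exact h e ⟨i, hi, he⟩
    simp_rw [e1]
    rw [integral_const_mul, gnp_prod h0 h1, Finset.card_biUnion]
    · rw [Finset.sum_congr rfl (fun i hi => hd i (hTS hi)), Finset.prod_const, mul_pow]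
      simp [← pow_mul, mul_comm]
    · intro i hi j hj hij
      exact hdis (hTS hi) (hTS hj) hij
  rw [Finset.sum_congr rfl this, ← Finset.prod_one_add, Finset.prod_const]

noncomputable def cnt {n : ℕ} {ι : Type*} (S : Finset ι) (F : ι → Finset (Sym2 (Fin n)))
    (ω : Sym2 (Fin n) → Bool) : ℕ :=
  (S.filter (fun i => ∀ e ∈ F i, ω e = true)).card

theorem cnt_prod {n : ℕ} {ι : Type*} (S : Finset ι) (F : ι → Finset (Sym2 (Fin n)))
    (ω : Sym2 (Fin n) → Bool) (θ : ℝ) :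
    ∏ i ∈ S, (1 + θ * (if ∀ e ∈ F i, ω e = true then (1 : ℝ) else 0)) = (1 + θ) ^ cnt S F ω := by
  have : ∀ i ∈ S, (1 + θ * (if ∀ e ∈ F i, ω e = true then (1 : ℝ) else 0)) =
    if (∀ e ∈ F i, ω e = true) then (1 + θ) else 1 := by
    intro i _; split_ifs <;> simp
  rw [Finset.prod_congr rfl this, Finset.prod_ite, Finset.prod_const, Finset.prod_const_one,
    mul_one, cnt]

theorem gnp_upper {n : ℕ} {q : ℝ} (h0 : 0 ≤ q) (h1 : q ≤ 1) {ι : Type*}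
    (S : Finset ι) (F : ι → Finset (Sym2 (Fin n))) (d : ℕ)
    (hd : ∀ i ∈ S, (F i).card = d) (hdis : (S : Set ι).PairwiseDisjoint F) (a : ℝ) :
    (gnp n q).real {ω | a ≤ cnt S F ω} ≤ Real.exp (S.card * q ^ d - a * Real.log 2) := by
  have := gnp_prob (n := n) h0 h1
  have hm := gnp_mgf h0 h1 S F d hd hdis 1
  simp_rw [cnt_prod] at hm
  have hmk := mul_meas_ge_le_integral_of_nonneg (μ := gnp n q)
    (f := fun ω => ((1 : ℝ) + 1) ^ cnt S F ω) (ae_of_all _ fun ω => by positivity)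
    Integrable.of_finite (Real.exp (a * Real.log 2))
  rw [hm] at hmk
  have hset : {ω | a ≤ cnt S F ω} ⊆
      {ω : Sym2 (Fin n) → Bool | Real.exp (a * Real.log 2) ≤ ((1 : ℝ) + 1) ^ cnt S F ω} := by
    intro ω hω
    simp only [Set.mem_ofPred_eq] at hω ⊢
    have : ((1 : ℝ) + 1) ^ cnt S F ω = Real.exp (cnt S F ω * Real.log 2) := by
      rw [Real.exp_nat_mul, Real.exp_log (by norm_num)]; norm_num
    rw [this, Real.exp_le_exp]
    exact mul_le_mul_of_nonneg_right hω (Real.log_nonneg (by norm_num))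
  have h2 := measureReal_mono (μ := gnp n q) hset
  have h3 : (1 + 1 * q ^ d) ^ S.card ≤ Real.exp (S.card * q ^ d) := by
    rw [Real.exp_nat_mul]
    apply pow_le_pow_left₀ (by positivity)
    have := Real.add_one_le_exp (q ^ d)
    linarith
  rw [Real.exp_sub, le_div_iff₀ (Real.exp_pos _)]
  calc _ ≤ _ := mul_le_mul_of_nonneg_right h2 (Real.exp_pos _).le
    _ ≤ _ := by rw [mul_comm]; exact hmk
    _ ≤ _ := h3

theorem gnp_lower {n : ℕ} {q : ℝ} (h0 : 0 ≤ q) (h1 : q ≤ 1) {ι : Type*}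
    (S : Finset ι) (F : ι → Finset (Sym2 (Fin n)))
    (hd : ∀ i ∈ S, (F i).card = 1) (hdis : (S : Set ι).PairwiseDisjoint F) (a : ℝ) :
    (gnp n q).real {ω | cnt S F ω ≤ a} ≤ Real.exp (a * Real.log 2 - S.card * q / 2) := by
  have := gnp_prob (n := n) h0 h1
  have hm := gnp_mgf h0 h1 S F 1 hd hdis (-1/2)
  simp_rw [cnt_prod] at hm
  have hmk := mul_meas_ge_le_integral_of_nonneg (μ := gnp n q)
    (f := fun ω => ((1 : ℝ) + (-1/2)) ^ cnt S F ω)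
    (ae_of_all _ fun ω => by simp only [Pi.zero_apply]; apply pow_nonneg; norm_num)
    Integrable.of_finite (Real.exp (-(a * Real.log 2)))
  rw [hm] at hmk
  have hset : {ω | cnt S F ω ≤ a} ⊆
      {ω : Sym2 (Fin n) → Bool | Real.exp (-(a * Real.log 2)) ≤ ((1 : ℝ) + (-1/2)) ^ cnt S F ω} := by
    intro ω hω
    simp only [Set.mem_ofPred_eq] at hω ⊢
    have : ((1 : ℝ) + (-1/2)) ^ cnt S F ω = Real.exp (-(cnt S F ω * Real.log 2)) := by
      rw [Real.exp_neg, Real.exp_nat_mul, Real.exp_log (by norm_num), ← inv_pow]; norm_num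
    rw [this, Real.exp_le_exp]
    apply neg_le_neg
    exact mul_le_mul_of_nonneg_right hω (Real.log_nonneg (by norm_num))
  have h2 := measureReal_mono (μ := gnp n q) hset
  have h3 : (1 + (-1/2) * q ^ 1) ^ S.card ≤ Real.exp (- (S.card * q / 2)) := by
    have : - (S.card * q / 2) = (S.card : ℝ) * (-q/2) := by ring
    rw [this, Real.exp_nat_mul]
    apply pow_le_pow_left₀ (by linarith)
    have := Real.add_one_le_exp (-q/2)
    linarith
  have e : Real.exp (a * Real.log 2 - S.card * q / 2) =
      Real.exp (- (S.card * q / 2)) / Real.exp (-(a * Real.log 2)) := by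
    rw [← Real.exp_sub]; congr 1; ring
  rw [e, le_div_iff₀ (Real.exp_pos _)]
  calc _ ≤ _ := mul_le_mul_of_nonneg_right h2 (Real.exp_pos _).le
    _ ≤ _ := by rw [mul_comm]; exact hmk
    _ ≤ _ := h3


def PropA {n : ℕ} (q : ℝ) (W : Finset (Fin n)) (ω : Sym2 (Fin n) → Bool) : Prop :=
  ∀ w ∈ W, 0.69 * n * q < cnt Wᶜ (fun u => {s(w, u)}) ω

def PropB {n : ℕ} (r k : ℕ) (q : ℝ) (W : Finset (Fin n)) (ω : Sym2 (Fin n) → Bool) : Prop :=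
  ∀ A X : Finset (Fin n), A ⊆ W → A.card = k → X ⊆ Wᶜ → (X.card : ℝ) ≤ 0.4 * n / r →
    (cnt (A ×ˢ X) (fun z => {s(z.1, z.2)}) ω : ℝ) < 0.6 * k * n * q / r

def Matched {n : ℕ} (W : Finset (Fin n)) (Q : Finset (Fin n × Fin n)) : Prop :=
  Q.Nonempty ∧ (∀ x ∈ Q, x.1 ∈ W ∧ x.2 ∈ W ∧ x.1 ≠ x.2) ∧
  (∀ x ∈ Q, ∀ y ∈ Q, x ≠ y → x.1 ≠ y.1 ∧ x.1 ≠ y.2 ∧ x.2 ≠ y.1 ∧ x.2 ≠ y.2)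

def PropC {n : ℕ} (r : ℕ) (q : ℝ) (W : Finset (Fin n)) (ω : Sym2 (Fin n) → Bool) : Prop :=
  ∀ (Q : Finset (Fin n × Fin n)) (X : Finset (Fin n)), Matched W Q → X ⊆ Wᶜ →
    X.card ≤ 3 * Q.card →
    (cnt (Q ×ˢ X) (fun z => {s(z.1.1, z.2), s(z.1.2, z.2)}) ω : ℝ) <
      Q.card * (n * q ^ 2 / (10 ^ 4 * r ^ 4))

theorem sym_cross {n : ℕ} {W : Finset (Fin n)} {a b u v : Fin n} (ha : a ∈ W) (_hb : b ∈ W)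
    (_hu : u ∈ Wᶜ) (hv : v ∈ Wᶜ) (h : s(a, u) = s(b, v)) : a = b ∧ u = v := by
  rw [Finset.mem_compl] at hv
  rcases Sym2.eq_iff.1 h with h | ⟨h1, h2⟩
  · exact h
  · subst h1; exact absurd ha hv

theorem union_real {α β : Type*} [MeasurableSpace α] (μ : Measure α) [IsFiniteMeasure μ]
    (s : Set α) (T : Finset β) (f : β → Set α) (g : β → ℝ) (h : s ⊆ ⋃ b ∈ T, f b)
    (hg : ∀ b ∈ T, μ.real (f b) ≤ g b) : μ.real s ≤ ∑ b ∈ T, g b :=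
  calc μ.real s ≤ _ := measureReal_mono h (measure_ne_top _ _)
    _ ≤ _ := measureReal_biUnion_finset_le _ _
    _ ≤ _ := Finset.sum_le_sum hg

theorem W_small {n r : ℕ} (hr : 2 ≤ r) {m : ℝ} (hm : m ≤ (n : ℝ) / (100 * r : ℝ) ^ 4) :
    m ≤ 0.01 * n := by
  refine hm.trans ?_
  have hr' : (2 : ℝ) ≤ r := by exact_mod_cast hr
  rw [div_le_iff₀ (by positivity)]
  have : (100 : ℝ) ≤ (100 * r : ℝ) ^ 4 := by
    calc (100 : ℝ) ≤ 100 ^ 4 := by norm_num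
      _ ≤ _ := pow_le_pow_left₀ (by norm_num) (by linarith) 4
  have hn : (0 : ℝ) ≤ n := Nat.cast_nonneg n
  nlinarith

theorem probA {n r : ℕ} (hr : 2 ≤ r) (hn : 2 ≤ n) {q : ℝ} (h0 : 0 ≤ q) (h1 : q ≤ 1)
    (W : Finset (Fin n)) (hW : (W.card : ℝ) ≤ (n : ℝ) / (100 * r : ℝ) ^ 4)
    (hq : 2 * 10 ^ 5 * r ^ 4 * Real.log n ≤ n * q ^ 2) :
    (gnp n q).real {ω | ¬ PropA q W ω} ≤ 1 / n := by
  have := gnp_prob (n := n) h0 h1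
  have hnpos : (0 : ℝ) < n := by positivity
  have hl : 0 ≤ Real.log n := Real.log_natCast_nonneg n
  have hWc := W_small hr hW
  have hr' : (2 : ℝ) ≤ r := by exact_mod_cast hr
  have hr4 : (1 : ℝ) ≤ r ^ 4 := one_le_pow₀ (by linarith)
  have hU : ((Wᶜ).card : ℝ) = n - W.card := by
    rw [Finset.card_compl, Fintype.card_fin, Nat.cast_sub]
    simpa using Finset.card_le_univ W
  have hb := union_real (gnp n q) {ω | ¬ PropA q W ω} W
    (fun w => {ω | (cnt Wᶜ (fun u => {s(w, u)}) ω : ℝ) ≤ 0.69 * n * q})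
    (fun _ => Real.exp (- (2 * Real.log n))) ?_ ?_
  · refine hb.trans ?_
    rw [Finset.sum_const, nsmul_eq_mul, Real.exp_neg, two_mul, Real.exp_add, Real.exp_log hnpos]
    rw [mul_inv, one_div, ← mul_assoc]
    have : (W.card : ℝ) * (n : ℝ)⁻¹ ≤ 1 := by
      rw [← div_eq_mul_inv, div_le_one hnpos]; linarith
    have h3 : (0 : ℝ) ≤ (n : ℝ)⁻¹ := by positivity
    nlinarith
  · intro ω hω
    simp only [PropA, Set.mem_ofPred_eq, not_forall, not_lt] at hω
    obtain ⟨w, hw, h⟩ := hω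
    simp only [Set.mem_iUnion]
    exact ⟨w, hw, h⟩
  · intro w hw
    refine (gnp_lower h0 h1 Wᶜ _ ?_ ?_ _).trans ?_
    · intro i _; simp
    · intro i hi j hj hij
      rw [Function.onFun, Finset.disjoint_singleton]
      intro h
      exact hij (sym_cross hw hw hi hj h).2
    · rw [Real.exp_le_exp, hU]
      have h2 := Real.log_two_lt_d9
      have hnq : 0 ≤ n * q := by positivity
      have h3 : n * q ^ 2 ≤ n * q := by nlinarith
      have h4 : 2 * 10 ^ 5 * Real.log n ≤ 2 * 10 ^ 5 * r ^ 4 * Real.log n := by nlinarith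
      have h5 : 0.69 * (n * q) * Real.log 2 ≤ 0.69 * (n * q) * 0.6932 := by
        apply mul_le_mul_of_nonneg_left _ (by positivity); linarith
      have h6 : W.card * q ≤ 0.01 * n * q := mul_le_mul_of_nonneg_right hWc h0
      nlinarith

theorem probB {n r k : ℕ} (hr : 2 ≤ r) {q : ℝ} (h0 : 0 ≤ q) (h1 : q ≤ 1)
    (W : Finset (Fin n)) (hk : 200 * r ≤ k * q) :
    (gnp n q).real {ω | ¬ PropB r k q W ω} ≤ Real.exp (- n) := by
  classical
  have := gnp_prob (n := n) h0 h1
  have hr' : (2 : ℝ) ≤ r := by exact_mod_cast hr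
  have hr0 : (0 : ℝ) < r := by linarith
  have hb := union_real (gnp n q) {ω | ¬ PropB r k q W ω}
    ((Finset.univ : Finset (Finset (Fin n) × Finset (Fin n))).filter (fun z =>
      z.1 ⊆ W ∧ z.1.card = k ∧ z.2 ⊆ Wᶜ ∧ (z.2.card : ℝ) ≤ 0.4 * n / r))
    (fun z => {ω | 0.6 * k * n * q / r ≤ (cnt (z.1 ×ˢ z.2) (fun z => {s(z.1, z.2)}) ω : ℝ)})
    (fun _ => Real.exp (- (3 * n))) ?_ ?_
  · refine hb.trans ?_
    rw [Finset.sum_const, nsmul_eq_mul]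
    have hc : (Finset.card ((Finset.univ : Finset (Finset (Fin n) × Finset (Fin n))).filter (fun z =>
      z.1 ⊆ W ∧ z.1.card = k ∧ z.2 ⊆ Wᶜ ∧ (z.2.card : ℝ) ≤ 0.4 * n / r)) : ℝ) ≤
        Real.exp (n * (2 * Real.log 2)) := by
      rw [Real.exp_nat_mul, two_mul, Real.exp_add, Real.exp_log (by norm_num), mul_pow]
      have := Finset.card_le_univ ((Finset.univ : Finset (Finset (Fin n) × Finset (Fin n))).filter
        (fun z => z.1 ⊆ W ∧ z.1.card = k ∧ z.2 ⊆ Wᶜ ∧ (z.2.card : ℝ) ≤ 0.4 * n / r))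
      rw [Fintype.card_prod, Fintype.card_finset, Fintype.card_fin] at this
      exact_mod_cast this
    refine (mul_le_mul_of_nonneg_right hc (Real.exp_pos _).le).trans ?_
    rw [← Real.exp_add, Real.exp_le_exp]
    have h2 := Real.log_two_lt_d9
    have : (n : ℝ) * (2 * Real.log 2) ≤ n * 2 := by
      apply mul_le_mul_of_nonneg_left _ (by positivity); linarith
    linarith
  · intro ω hω
    simp only [PropB, Set.mem_ofPred_eq, not_forall, not_lt] at hω
    obtain ⟨A, X, h2, h3, h4, h5, h6⟩ := hω
    simp only [Set.mem_iUnion]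
    exact ⟨(A, X), by simp [h2, h3, h4, h5], h6⟩
  · rintro ⟨A, X⟩ hz
    simp only [Finset.mem_filter, Finset.mem_univ, true_and] at hz
    obtain ⟨h2, h3, h4, h5⟩ := hz
    refine (gnp_upper h0 h1 (A ×ˢ X) _ 1 ?_ ?_ _).trans ?_
    · intro i _; simp
    · intro i hi j hj hij
      rw [Function.onFun, Finset.disjoint_singleton]
      intro h
      simp only [Finset.coe_product, Set.mem_prod, Finset.mem_coe] at hi hj
      have := sym_cross (h2 hi.1) (h2 hj.1) (h4 hi.2) (h4 hj.2) h
      exact hij (Prod.ext this.1 this.2)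
    · rw [Real.exp_le_exp, Finset.card_product, h3]
      push_cast
      have hl := Real.log_two_gt_d9
      have e1 : (k : ℝ) * X.card * q ^ 1 ≤ 0.4 * (k * q * n / r) := by
        calc (k : ℝ) * X.card * q ^ 1 = (k * q) * X.card := by ring
          _ ≤ (k * q) * (0.4 * n / r) := mul_le_mul_of_nonneg_left h5 (by positivity)
          _ = _ := by ring
      have hT : 200 * (n : ℝ) ≤ k * q * n / r := by
        rw [le_div_iff₀ hr0]
        have : (0 : ℝ) ≤ n := Nat.cast_nonneg n
        nlinarith
      have e2 : 0.6 * k * n * q / r * Real.log 2 = 0.6 * (k * q * n / r) * Real.log 2 := by ring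
      have e3 : 0.6 * (k * q * n / r) * 0.693 ≤ 0.6 * (k * q * n / r) * Real.log 2 := by
        apply mul_le_mul_of_nonneg_left _ (by positivity); linarith
      rw [e2]
      linarith

theorem probC {n r : ℕ} (hr : 2 ≤ r) (hn : 2 ≤ n) {q : ℝ} (h0 : 0 ≤ q) (h1 : q ≤ 1)
    (W : Finset (Fin n)) (hW : (W.card : ℝ) ≤ (n : ℝ) / (100 * r : ℝ) ^ 4)
    (hq : 2 * 10 ^ 5 * r ^ 4 * Real.log n ≤ n * q ^ 2) :
    (gnp n q).real {ω | ¬ PropC r q W ω} ≤ Real.exp 2 / n := by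
  classical
  have := gnp_prob (n := n) h0 h1
  have hnpos : (0 : ℝ) < n := by positivity
  have hn1 : (1 : ℝ) ≤ n := by exact_mod_cast (by omega : 1 ≤ n)
  have hl : 0 ≤ Real.log n := Real.log_natCast_nonneg n
  have hr' : (2 : ℝ) ≤ r := by exact_mod_cast hr
  have hr0 : (0 : ℝ) < r := by linarith
  have hb := union_real (gnp n q) {ω | ¬ PropC r q W ω}
    ((Finset.univ : Finset (Finset (Fin n × Fin n) × Finset (Fin n))).filter (fun z =>
      Matched W z.1 ∧ z.2 ⊆ Wᶜ ∧ z.2.card ≤ 3 * z.1.card))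
    (fun z => {ω | z.1.card * (n * q ^ 2 / (10 ^ 4 * r ^ 4)) ≤
      (cnt (z.1 ×ˢ z.2) (fun z => {s(z.1.1, z.2), s(z.1.2, z.2)}) ω : ℝ)})
    (fun z => (n : ℝ)⁻¹ * (((n : ℝ)⁻¹ ^ 3) ^ z.1.card * ((n : ℝ)⁻¹ ^ 2) ^ z.2.card)) ?_ ?_
  · refine hb.trans ?_
    calc _ ≤ ∑ z : Finset (Fin n × Fin n) × Finset (Fin n),
          (n : ℝ)⁻¹ * (((n : ℝ)⁻¹ ^ 3) ^ z.1.card * ((n : ℝ)⁻¹ ^ 2) ^ z.2.card) := by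
          apply Finset.sum_le_univ_sum_of_nonneg
          intro z; positivity
      _ = (n : ℝ)⁻¹ * ((1 + (n : ℝ)⁻¹ ^ 3) ^ (n * n) * (1 + (n : ℝ)⁻¹ ^ 2) ^ n) := by
          rw [← Finset.mul_sum, Fintype.sum_prod_type]
          dsimp only
          rw [← Finset.sum_mul_sum]
          have gen : ∀ (α : Type) [Fintype α] [DecidableEq α] (x : ℝ),
              ∑ s : Finset α, x ^ s.card = (1 + x) ^ Fintype.card α := by
            intro α _ _ x
            have := Finset.prod_one_add (f := fun _ : α => x) (Finset.univ : Finset α)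
            simp only [Finset.prod_const, Finset.powerset_univ] at this
            exact this.symm
          rw [gen, gen]
          simp
      _ ≤ (n : ℝ)⁻¹ * (Real.exp 1 * Real.exp 1) := by
          have gen : ∀ (x : ℝ) (m : ℕ), 0 ≤ x → m * x ≤ 1 → (1 + x) ^ m ≤ Real.exp 1 := by
            intro x m hx hm
            calc (1 + x) ^ m ≤ (Real.exp x) ^ m := by
                  apply pow_le_pow_left₀ (by positivity)
                  linarith [Real.add_one_le_exp x]
              _ = Real.exp (m * x) := by rw [Real.exp_nat_mul]
              _ ≤ _ := Real.exp_le_exp.2 hm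
          have hi : (n : ℝ)⁻¹ ≤ 1 := inv_le_one_of_one_le₀ hn1
          have hi0 : (0 : ℝ) ≤ (n : ℝ)⁻¹ := by positivity
          gcongr
          · apply gen _ _ (by positivity)
            push_cast
            have : (n : ℝ) * n * (n : ℝ)⁻¹ ^ 3 = (n : ℝ)⁻¹ := by field_simp
            rw [this]; exact hi
          · apply gen _ _ (by positivity)
            have : (n : ℝ) * (n : ℝ)⁻¹ ^ 2 = (n : ℝ)⁻¹ := by field_simp
            rw [this]; exact hi
      _ = _ := by rw [← Real.exp_add]; norm_num; rw [div_eq_mul_inv, mul_comm]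
  · intro ω hω
    simp only [PropC, Set.mem_ofPred_eq, not_forall, not_lt] at hω
    obtain ⟨Q, X, h2, h3, h4, h5⟩ := hω
    simp only [Set.mem_iUnion]
    exact ⟨(Q, X), by simp [h2, h3, h4], h5⟩
  · rintro ⟨Q, X⟩ hz
    simp only [Finset.mem_filter, Finset.mem_univ, true_and] at hz
    obtain ⟨⟨hne, hQW, hQd⟩, h3, h4⟩ := hz
    have hQ1 : 1 ≤ Q.card := Finset.card_pos.2 hne
    have hQc : Q.card ≤ W.card := by
      apply Finset.card_le_card_of_injOn (fun x => x.1) (fun x hx => (hQW x hx).1)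
      intro x hx y hy hxy
      by_contra hne
      exact (hQd x hx y hy hne).1 hxy
    refine (gnp_upper h0 h1 (Q ×ˢ X) _ 2 ?_ ?_ _).trans ?_
    · intro i hi
      rw [Finset.mem_product] at hi
      apply Finset.card_pair
      intro h
      have hq1 := hQW i.1 hi.1
      exact hq1.2.2 (sym_cross hq1.1 hq1.2.1 (h3 hi.2) (h3 hi.2) h).1
    · intro i hi j hj hij
      simp only [Finset.coe_product, Set.mem_prod, Finset.mem_coe] at hi hj
      have hi1 := hQW i.1 hi.1
      have hj1 := hQW j.1 hj.1
      have hiU := h3 hi.2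
      have hjU := h3 hj.2
      have key : ∀ a ∈ W, ∀ b ∈ W, (a = i.1.1 ∨ a = i.1.2) → (b = j.1.1 ∨ b = j.1.2) →
          s(a, i.2) ≠ s(b, j.2) := by
        intro a ha b hb ha' hb' h
        obtain ⟨hab, huv⟩ := sym_cross ha hb hiU hjU h
        have hne : i.1 ≠ j.1 := fun e => hij (Prod.ext e huv)
        have := hQd i.1 hi.1 j.1 hj.1 hne
        rcases ha' with rfl | rfl <;> rcases hb' with rfl | rfl <;> tauto
      rw [Function.onFun, Finset.disjoint_left]
      intro e he he'
      simp only [Finset.mem_insert, Finset.mem_singleton] at he he'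
      rcases he with he | he <;> rcases he' with he' | he'
      · exact key _ hi1.1 _ hj1.1 (Or.inl rfl) (Or.inl rfl) (he.symm.trans he')
      · exact key _ hi1.1 _ hj1.2.1 (Or.inl rfl) (Or.inr rfl) (he.symm.trans he')
      · exact key _ hi1.2.1 _ hj1.1 (Or.inr rfl) (Or.inl rfl) (he.symm.trans he')
      · exact key _ hi1.2.1 _ hj1.2.1 (Or.inr rfl) (Or.inr rfl) (he.symm.trans he')
    · have e0 : (n : ℝ)⁻¹ * (((n : ℝ)⁻¹ ^ 3) ^ Q.card * ((n : ℝ)⁻¹ ^ 2) ^ X.card) =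
          Real.exp (-((1 + 3 * Q.card + 2 * X.card : ℕ) * Real.log n)) := by
        rw [Real.exp_neg, Real.exp_nat_mul, Real.exp_log hnpos, ← pow_mul, ← pow_mul, inv_pow,
          inv_pow, pow_add, pow_add, pow_one, mul_inv, mul_inv, mul_assoc]
      simp only
      rw [e0, Real.exp_le_exp, Finset.card_product]
      push_cast
      have hX : (X.card : ℝ) ≤ 3 * Q.card := by exact_mod_cast h4
      have hQ1' : (1 : ℝ) ≤ Q.card := by exact_mod_cast hQ1
      have hQn : (Q.card : ℝ) ≤ (n : ℝ) / (100 * r : ℝ) ^ 4 :=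
        le_trans (by exact_mod_cast hQc) hW
      set M : ℝ := ((Q.card : ℕ) : ℝ) with hM
      set Y : ℝ := n * q ^ 2 / (10 ^ 4 * r ^ 4) with hY
      have hY0 : 0 ≤ Y := by positivity
      have hYl : 20 * Real.log n ≤ Y := by
        rw [hY, le_div_iff₀ (by positivity)]
        linarith
      have e1 : M * X.card * q ^ 2 ≤ M * (0.001 * Y) := by
        rw [mul_assoc]
        apply mul_le_mul_of_nonneg_left _ (by linarith)
        calc (X.card : ℝ) * q ^ 2 ≤ (3 * ((n : ℝ) / (100 * r : ℝ) ^ 4)) * q ^ 2 := by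
              apply mul_le_mul_of_nonneg_right _ (by positivity); linarith
          _ = 0.0003 * Y := by rw [hY]; field_simp; norm_num; ring
          _ ≤ _ := by linarith
      have hl2 := Real.log_two_gt_d9
      have e2 : M * Y * 0.69 ≤ M * Y * Real.log 2 := by
        apply mul_le_mul_of_nonneg_left _ (by positivity); linarith
      have e3 : (1 + 3 * M + 2 * X.card) * Real.log n ≤ (10 * M) * Real.log n := by
        apply mul_le_mul_of_nonneg_right _ hl; linarith
      have e4 : M * (20 * Real.log n) ≤ M * Y := mul_le_mul_of_nonneg_left hYl (by linarith)
      have e5 : 0 ≤ M * Y := by positivity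
      nlinarith


theorem chain_walk {V ι : Type*} (G : SimpleGraph V) (c : Sym2 V → ι) (i : ι) :
    ∀ (l : List V) (a : V), (a :: l).Nodup →
      List.IsChain (fun a b => G.Adj a b ∧ c s(a, b) = i) (a :: l) →
      ∃ b, (a :: l).getLast? = some b ∧
        ∃ w : G.Walk a b, w.support = a :: l ∧ ∀ e ∈ w.edges, c e = i := by
  intro l
  induction l with
  | nil => intro a _ _; exact ⟨a, by simp, SimpleGraph.Walk.nil, by simp, by simp⟩
  | cons b l ih =>
    intro a hn hc
    rw [List.isChain_cons_cons] at hc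
    obtain ⟨d, hd, w, h1, h2⟩ := ih b (List.nodup_cons.1 hn).2 hc.2
    refine ⟨d, by rw [List.getLast?_cons_cons]; exact hd, SimpleGraph.Walk.cons hc.1.1 w, by simp [h1], ?_⟩
    intro e he
    rw [SimpleGraph.Walk.edges_cons] at he
    rcases List.mem_cons.1 he with rfl | he
    · exact hc.1.2
    · exact h2 e he

theorem mono_of_list {V ι : Type*} (G : SimpleGraph V) (c : Sym2 V → ι) (i : ι) (l : List V)
    (h3 : 3 ≤ l.length) (hn : l.Nodup)
    (hc : List.IsChain (fun a b => G.Adj a b ∧ c s(a, b) = i) l)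
    (hl : ∀ x ∈ l.getLast?, ∀ y ∈ l.head?, G.Adj x y ∧ c s(x, y) = i) :
    IsMonoCycle G c i {x | x ∈ l} := by
  right; right
  cases l with
  | nil => simp at h3
  | cons a l =>
    obtain ⟨d, hd, w, h1, h2⟩ := chain_walk G c i l a hn hc
    have hcl := hl d hd a (by simp)
    refine ⟨_, SimpleGraph.Walk.cons hcl.1 w, ?_, ?_, ?_⟩
    · rw [SimpleGraph.Walk.isCycle_iff_isPath_tail_and_le_length]
      constructor
      · rw [SimpleGraph.Walk.isPath_def, SimpleGraph.Walk.support_tail_of_not_nil _ (by simp)]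
        simpa [h1] using hn
      · have := w.length_support
        rw [h1] at this
        rw [SimpleGraph.Walk.length_cons]
        omega
    · intro e he
      rw [SimpleGraph.Walk.edges_cons] at he
      rcases List.mem_cons.1 he with rfl | he
      · exact hcl.2
      · exact h2 e he
    · ext x
      simp only [Set.mem_ofPred_eq, SimpleGraph.Walk.support_cons, h1]
      constructor
      · intro hx; exact List.mem_cons_of_mem _ hx
      · intro hx
        rcases List.mem_cons.1 hx with rfl | hx
        · exact List.mem_of_getLast? hd
        · exact hx

theorem chain_flat {V : Type*} (R : V → V → Prop) (g : V → V) :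
    ∀ (l : List V), (∀ w ∈ l, R w (g w)) → List.IsChain (fun a b => R (g a) b) l →
      List.IsChain R (l.flatMap (fun w => [w, g w])) := by
  intro l
  induction l with
  | nil => intro _ _; simp
  | cons a l ih =>
    intro h1 h2
    cases l with
    | nil => simpa using h1 a (by simp)
    | cons b l =>
      rw [List.isChain_cons_cons] at h2
      have := ih (fun w hw => h1 w (List.mem_cons_of_mem _ hw)) h2.2
      simp only [List.flatMap_cons, List.cons_append, List.nil_append] at this ⊢
      exact List.IsChain.cons_cons (h1 a (by simp)) (List.IsChain.cons_cons h2.1 this)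

theorem flat_getLast {V : Type*} (g : V → V) :
    ∀ (l : List V), (l.flatMap (fun w => [w, g w])).getLast? = l.getLast?.map g := by
  intro l
  induction l using List.reverseRecOn with
  | nil => simp
  | append_singleton l a ih => simp [List.flatMap_append, List.getLast?_append]

theorem flat_head {V : Type*} (g : V → V) :
    ∀ (l : List V), (l.flatMap (fun w => [w, g w])).head? = l.head? := by
  intro l
  cases l <;> simp

theorem flat_length {V : Type*} (g : V → V) :
    ∀ (l : List V), (l.flatMap (fun w => [w, g w])).length = 2 * l.length := by
  intro l
  induction l with
  | nil => simp
  | cons a l ih => simp [ih]; ring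

theorem cyc_formPerm {V : Type*} [DecidableEq V] (R : V → V → Prop) (l : List V) (hn : l.Nodup)
    (hc : List.IsChain R l) (hl : ∀ x ∈ l.getLast?, ∀ y ∈ l.head?, R x y) :
    ∀ w ∈ l, R w (l.formPerm w) := by
  intro w hw
  obtain ⟨j, hj, rfl⟩ := List.getElem_of_mem hw
  by_cases h : j + 1 < l.length
  · rw [List.formPerm_apply_lt_getElem l hn j h]
    exact List.isChain_iff_getElem.1 hc j h
  · have hjl : j = l.length - 1 := by omega
    rw [List.formPerm_apply_getElem l hn j hj]
    apply hl
    · rw [Option.mem_def, List.getLast?_eq_getElem?, ← hjl, List.getElem?_eq_getElem hj]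
    · rw [Option.mem_def, List.head?_eq_getElem?]
      have : (j + 1) % l.length = 0 := by
        have : j + 1 = l.length := by omega
        simp [this]
      simp [this]

theorem formPerm_cyc {V : Type*} [DecidableEq V] (R : V → V → Prop) (l : List V) (hn : l.Nodup)
    (h : ∀ w ∈ l, R w (l.formPerm w)) :
    List.IsChain R l ∧ ∀ x ∈ l.getLast?, ∀ y ∈ l.head?, R x y := by
  constructor
  · rw [List.isChain_iff_getElem]
    intro j hj
    have := h l[j] (List.getElem_mem _)
    rwa [List.formPerm_apply_lt_getElem l hn j hj] at this
  · intro x hx y hy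
    cases l with
    | nil => simp at hx
    | cons a l =>
      rw [Option.mem_def, List.getLast?_eq_getLast_of_ne_nil (by simp)] at hx
      simp only [Option.some.injEq] at hx
      simp at hy
      subst hy; subst hx
      have := h _ (List.getLast_mem (List.cons_ne_nil a l))
      rwa [List.formPerm_apply_getLast] at this

theorem third_set {V : Type*} [DecidableEq V] (τ : V → V) (T : Finset V)
    (hi : Set.InjOn τ T) (hf : ∀ w ∈ T, τ w ≠ w) :
    ∃ T' ⊆ T, (∀ x ∈ T', ∀ y ∈ T', τ x ≠ y) ∧ T.card ≤ 3 * T'.card := by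
  obtain ⟨T', hT', hmax⟩ := Finset.exists_max_image
    (T.powerset.filter (fun S => ∀ x ∈ S, ∀ y ∈ S, τ x ≠ y)) Finset.card ⟨∅, by simp⟩
  rw [Finset.mem_filter, Finset.mem_powerset] at hT'
  refine ⟨T', hT'.1, hT'.2, ?_⟩
  have hsub : T ⊆ (T' ∪ T'.image τ) ∪ T.filter (fun w => τ w ∈ T') := by
    intro w hw
    by_contra hcon
    simp only [Finset.mem_union, Finset.mem_image, Finset.mem_filter, not_or, not_exists, not_and]
      at hcon
    obtain ⟨⟨h1, h2⟩, h3⟩ := hcon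
    have := hmax (insert w T') (by
      rw [Finset.mem_filter, Finset.mem_powerset]
      refine ⟨Finset.insert_subset hw hT'.1, ?_⟩
      intro x hx y hy hxy
      rcases Finset.mem_insert.1 hx with hx1 | hx1 <;>
        rcases Finset.mem_insert.1 hy with hy1 | hy1
      · rw [hx1, hy1] at hxy; exact hf _ hw hxy
      · rw [hx1] at hxy; exact h3 hw (hxy ▸ hy1)
      · rw [hy1] at hxy; exact h2 x hx1 hxy
      · exact hT'.2 x hx1 y hy1 hxy)
    rw [Finset.card_insert_of_notMem h1] at this
    omega
  have c1 : (T'.image τ).card ≤ T'.card := Finset.card_image_le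
  have c2 : (T.filter (fun w => τ w ∈ T')).card ≤ T'.card := by
    apply Finset.card_le_card_of_injOn τ
    · intro w hw; exact (Finset.mem_filter.1 hw).2
    · intro x hx y hy hxy
      exact hi (Finset.mem_filter.1 hx).1 (Finset.mem_filter.1 hy).1 hxy
  have := Finset.card_le_card hsub
  have c3 := Finset.card_union_le (T' ∪ T'.image τ) (T.filter (fun w => τ w ∈ T'))
  have c4 := Finset.card_union_le T' (T'.image τ)
  omega

theorem hall_conn {n r : ℕ} {q : ℝ} {W : Finset (Fin n)} {ω : Sym2 (Fin n) → Bool}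
    (hC : PropC r q W ω) (C : Finset (Fin n)) (τ : Fin n → Fin n)
    (hi : Set.InjOn τ C) (hf : ∀ w ∈ C, τ w ≠ w) (hCW : ∀ w ∈ C, w ∈ W) (hτW : ∀ w ∈ C, τ w ∈ W)
    (t : Fin n → Finset (Fin n))
    (ht : ∀ w ∈ C, ∀ u ∈ t w, u ∈ Wᶜ ∧ ω s(w, u) = true ∧ ω s(τ w, u) = true)
    (htc : ∀ w ∈ C, n * q ^ 2 / (10 ^ 4 * r ^ 4) ≤ ((t w).card : ℝ)) :
    ∃ g : Fin n → Fin n, Set.InjOn g C ∧ ∀ w ∈ C, g w ∈ t w := by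
  classical
  have hall := (Finset.all_card_le_biUnion_card_iff_exists_injective
    (fun w : {w // w ∈ C} => t w.1)).1 ?_
  · obtain ⟨f, hf1, hf2⟩ := hall
    refine ⟨fun w => if h : w ∈ C then f ⟨w, h⟩ else w, ?_, ?_⟩
    · intro x hx y hy hxy
      have hx' : x ∈ C := hx
      have hy' : y ∈ C := hy
      simp only [hx', hy', dif_pos] at hxy
      have := hf1 hxy
      simpa using this
    · intro w hw
      simp only [hw, dif_pos]
      exact hf2 ⟨w, hw⟩
  · intro T0
    by_contra hcon
    push Not at hcon
    set T := T0.map (Function.Embedding.subtype _) with hT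
    have hTC : ∀ w ∈ T, w ∈ C := by
      intro w hw
      rw [hT, Finset.mem_map] at hw
      obtain ⟨x, _, rfl⟩ := hw
      exact x.2
    have hTc : T.card = T0.card := Finset.card_map _
    set X := T0.biUnion (fun w : {w // w ∈ C} => t w.1) with hX
    have hXt : ∀ w ∈ T, t w ⊆ X := by
      intro w hw u hu
      rw [hT, Finset.mem_map] at hw
      obtain ⟨x, hx, rfl⟩ := hw
      rw [hX, Finset.mem_biUnion]
      exact ⟨x, hx, hu⟩
    have hXU : X ⊆ Wᶜ := by
      intro u hu
      rw [hX, Finset.mem_biUnion] at hu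
      obtain ⟨x, hx, hu⟩ := hu
      exact (ht x.1 x.2 u hu).1
    obtain ⟨T', hT'T, hT'd, hT'c⟩ := third_set τ T (fun x hx y hy h => hi (hTC x hx) (hTC y hy) h)
      (fun w hw => hf w (hTC w hw))
    set Q := T'.image (fun w => (w, τ w)) with hQ
    have hQc : Q.card = T'.card := by
      apply Finset.card_image_of_injective
      intro x y h; exact (Prod.ext_iff.1 h).1
    have hQm : ∀ x ∈ Q, x.1 ∈ T' ∧ x.2 = τ x.1 := by
      intro x hx
      rw [hQ, Finset.mem_image] at hx
      obtain ⟨w, hw, rfl⟩ := hx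
      exact ⟨hw, rfl⟩
    have hM : Matched W Q := by
      refine ⟨?_, ?_, ?_⟩
      · rw [← Finset.card_pos]; omega
      · intro x hx
        obtain ⟨h1, h2⟩ := hQm x hx
        have h3 := hTC _ (hT'T h1)
        rw [h2]
        exact ⟨hCW _ h3, hτW _ h3, (hf _ h3).symm⟩
      · intro x hx y hy hxy
        obtain ⟨h1, h2⟩ := hQm x hx
        obtain ⟨h3, h4⟩ := hQm y hy
        have hne : x.1 ≠ y.1 := fun e => hxy (Prod.ext e (by rw [h2, h4, e]))
        rw [h2, h4]
        exact ⟨hne, (hT'd _ h3 _ h1).symm, hT'd _ h1 _ h3,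
          fun e => hne (hi (hTC _ (hT'T h1)) (hTC _ (hT'T h3)) e)⟩
    have hlt := hC Q X hM hXU (by omega)
    have hge : ∑ w ∈ T', (t w).card ≤
        cnt (Q ×ˢ X) (fun z => {s(z.1.1, z.2), s(z.1.2, z.2)}) ω := by
      rw [← Finset.card_sigma]
      unfold cnt
      apply Finset.card_le_card_of_injOn (fun z : (Σ _ : Fin n, Fin n) => ((z.1, τ z.1), z.2))
      · rintro ⟨w, u⟩ hz
        simp only [Finset.coe_sigma, Set.mem_sigma_iff, Finset.mem_coe] at hz
        have hwT := hT'T hz.1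
        have := ht w (hTC w hwT) u hz.2
        simp only [Finset.coe_filter, Finset.mem_product, Set.mem_ofPred_eq, Finset.mem_insert,
          Finset.mem_singleton]
        refine ⟨⟨Finset.mem_image_of_mem _ hz.1, hXt w hwT hz.2⟩, ?_⟩
        rintro e (rfl | rfl)
        · exact this.2.1
        · exact this.2.2
      · rintro ⟨w, u⟩ _ ⟨w', u'⟩ _ h
        simp only [Prod.mk.injEq] at h
        obtain ⟨⟨rfl, _⟩, rfl⟩ := h
        rfl
    have hge2 : (T'.card : ℝ) * (n * q ^ 2 / (10 ^ 4 * r ^ 4)) ≤ ∑ w ∈ T', ((t w).card : ℝ) := by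
      rw [← nsmul_eq_mul, ← Finset.sum_const]
      exact Finset.sum_le_sum (fun w hw => htc w (hTC w (hT'T hw)))
    have hge' : (∑ w ∈ T', ((t w).card : ℝ)) ≤
        (cnt (Q ×ˢ X) (fun z => {s(z.1.1, z.2), s(z.1.2, z.2)}) ω : ℝ) := by exact_mod_cast hge
    rw [hQc] at hlt
    linarith


theorem pig_core {ι V : Type*} [Fintype ι] [DecidableEq ι] (U : Finset V) (x : ι → V → ℝ)
    (hx : ∀ i u, x i u * x i u = x i u) {α β : ℝ} 
    (h1 : ∀ i, α ≤ ∑ u ∈ U, x i u) (h2 : ∀ i j, i ≠ j → ∑ u ∈ U, x i u * x j u ≤ β) :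
    Fintype.card ι * α ≤ U.card + Fintype.card ι * (Fintype.card ι - 1) * β := by
  have e1 : ∀ u, 2 * ∑ i, x i u - 1 ≤ ∑ i, ∑ j, x i u * x j u := by
    intro u
    rw [← Finset.sum_mul_sum]
    nlinarith [sq_nonneg (∑ i, x i u - 1)]
  have e2 : ∑ u ∈ U, (2 * ∑ i, x i u - 1) ≤ ∑ u ∈ U, ∑ i, ∑ j, x i u * x j u :=
    Finset.sum_le_sum (fun u _ => e1 u)
  have e3 : ∑ u ∈ U, ∑ i, ∑ j, x i u * x j u = ∑ i, ∑ j, ∑ u ∈ U, x i u * x j u := by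
    rw [Finset.sum_comm]
    exact Finset.sum_congr rfl (fun i _ => Finset.sum_comm)
  have e4 : ∑ u ∈ U, (2 * ∑ i, x i u - 1) = 2 * ∑ i, ∑ u ∈ U, x i u - U.card := by
    rw [Finset.sum_sub_distrib, ← Finset.mul_sum, Finset.sum_comm]; simp
  have e5 : ∀ i, ∑ j, ∑ u ∈ U, x i u * x j u ≤ ∑ u ∈ U, x i u + (Fintype.card ι - 1) * β := by
    intro i
    rw [← Finset.add_sum_erase _ _ (Finset.mem_univ i)]
    apply add_le_add
    · exact le_of_eq (Finset.sum_congr rfl (fun u _ => hx i u))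
    · calc _ ≤ ∑ j ∈ Finset.univ.erase i, β := Finset.sum_le_sum (fun j hj =>
            h2 i j (Finset.ne_of_mem_erase hj).symm)
        _ = _ := by
          have : 1 ≤ Fintype.card ι := Fintype.card_pos_iff.2 ⟨i⟩
          rw [Finset.sum_const, Finset.card_erase_of_mem (Finset.mem_univ i), nsmul_eq_mul,
            Finset.card_univ, Nat.cast_sub this]; simp
  have e6 : ∑ i, ∑ j, ∑ u ∈ U, x i u * x j u ≤
      ∑ i, ∑ u ∈ U, x i u + Fintype.card ι * ((Fintype.card ι - 1) * β) := by
    calc _ ≤ ∑ i, (∑ u ∈ U, x i u + (Fintype.card ι - 1) * β) := Finset.sum_le_sum (fun i _ => e5 i)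
      _ = _ := by rw [Finset.sum_add_distrib]; simp
  have e7 : Fintype.card ι * α ≤ ∑ i, ∑ u ∈ U, x i u := by
    calc _ = ∑ i : ι, α := by simp
      _ ≤ _ := Finset.sum_le_sum (fun i _ => h1 i)
  rw [e4, e3] at e2
  linarith

theorem sep_core {V : Type*} [DecidableEq V] {n r k : ℕ} (hr : 2 ≤ r) (hn : 0 < n) (hk : 0 < k)
    {q : ℝ} (hq : 0 < q) (U : Finset V) (hU : U.card ≤ n) (e : V → V → ℝ)
    (he : ∀ a u, 0 ≤ e a u) (B : Fin (3 * r + 1) → Finset V) (hB : ∀ j, (B j).card = k)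
    (hdeg : ∀ j, ∀ a ∈ B j, 0.69 * n * q / r ≤ ∑ u ∈ U, e a u)
    (hX : ∀ j, ∀ X ⊆ U, (X.card : ℝ) ≤ 0.4 * n / r →
      ∑ a ∈ B j, ∑ u ∈ X, e a u < 0.6 * k * n * q / r) :
    ∃ i j, i ≠ j ∧ ∃ a ∈ B i, ∃ b ∈ B j,
      n * q ^ 2 / (10 ^ 4 * r ^ 4) ≤ ∑ u ∈ U, e a u * e b u := by
  classical
  have hr' : (2 : ℝ) ≤ r := by exact_mod_cast hr
  have hn' : (0 : ℝ) < n := by exact_mod_cast hn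
  have hk' : (0 : ℝ) < k := by exact_mod_cast hk
  have hU' : (U.card : ℝ) ≤ n := by exact_mod_cast hU
  set d : Fin (3 * r + 1) → V → ℝ := fun j u => ∑ a ∈ B j, e a u with hd
  have hd0 : ∀ j u, 0 ≤ d j u := fun j u => Finset.sum_nonneg (fun a _ => he a u)
  set t : ℝ := 0.09 * k * q / r with ht
  have ht0 : 0 < t := by positivity
  set x : Fin (3 * r + 1) → V → ℝ := fun j u => if t ≤ d j u then 1 else 0 with hx
  have hXs : ∀ j, 0.4 * n / r ≤ ∑ u ∈ U, x j u := by
    intro j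
    by_contra hcon
    push Not at hcon
    have hs : ∑ u ∈ U, x j u = ((U.filter (fun u => t ≤ d j u)).card : ℝ) := by
      simp [hx]
    rw [hs] at hcon
    have h1 := hX j _ (Finset.filter_subset (fun u => t ≤ d j u) U) hcon.le
    rw [Finset.sum_comm] at h1
    have h2 : (k : ℝ) * (0.69 * n * q / r) ≤ ∑ u ∈ U, d j u := by
      rw [hd, Finset.sum_comm, ← hB j, ← nsmul_eq_mul, ← Finset.sum_const]
      exact Finset.sum_le_sum (hdeg j)
    rw [← Finset.sum_filter_add_sum_filter_not U (fun u => t ≤ d j u)] at h2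
    have h3 : ∑ u ∈ U.filter (fun u => ¬ t ≤ d j u), d j u ≤ n * t := by
      calc _ ≤ ∑ u ∈ U.filter (fun u => ¬ t ≤ d j u), t := Finset.sum_le_sum (fun u hu =>
            (not_le.1 (Finset.mem_filter.1 hu).2).le)
        _ = (U.filter (fun u => ¬ t ≤ d j u)).card * t := by rw [Finset.sum_const, nsmul_eq_mul]
        _ ≤ n * t := by
          apply mul_le_mul_of_nonneg_right _ ht0.le
          exact le_trans (by exact_mod_cast Finset.card_filter_le _ _) hU'
    have h4 : (k : ℝ) * (0.69 * n * q / r) = 0.6 * k * n * q / r + n * t := by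
      rw [ht]; field_simp; ring
    linarith
  have hpair : ∃ i j, i ≠ j ∧ (n : ℝ) / (60 * r ^ 2) < ∑ u ∈ U, x i u * x j u := by
    by_contra hcon
    push Not at hcon
    have := pig_core U x (fun i u => by simp [hx]) hXs hcon
    simp only [Fintype.card_fin] at this
    push_cast at this
    have g1 : (3 * (r : ℝ) + 1) * (0.4 * n / r) = 1.2 * n + 0.4 * n / r := by field_simp; ring
    have g2 : (3 * (r : ℝ) + 1) * (3 * (r : ℝ) + 1 - 1) * (n / (60 * r ^ 2)) =
      0.15 * n + 0.05 * n / r := by field_simp; ring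
    have g3 : 0 < n / (r : ℝ) := by positivity
    have g4 : 0.4 * n / r = 0.4 * (n / (r : ℝ)) := by ring
    have g5 : 0.05 * n / r = 0.05 * (n / (r : ℝ)) := by ring
    rw [g1, g2, g4, g5] at this
    linarith
  obtain ⟨i, j, hij, hlt⟩ := hpair
  refine ⟨i, j, hij, ?_⟩
  by_contra hcon
  push Not at hcon
  have h1 : ∑ u ∈ U, d i u * d j u = ∑ a ∈ B i, ∑ b ∈ B j, ∑ u ∈ U, e a u * e b u := by
    simp_rw [hd, Finset.sum_mul_sum]
    rw [Finset.sum_comm]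
    exact Finset.sum_congr rfl (fun i _ => Finset.sum_comm)
  have h2 : ∑ a ∈ B i, ∑ b ∈ B j, ∑ u ∈ U, e a u * e b u ≤
      k * (k * (n * q ^ 2 / (10 ^ 4 * r ^ 4))) := by
    calc _ ≤ ∑ a ∈ B i, ∑ b ∈ B j, (n * q ^ 2 / (10 ^ 4 * r ^ 4) : ℝ) :=
          Finset.sum_le_sum (fun a ha => Finset.sum_le_sum (fun b hb => (hcon a ha b hb).le))
      _ = _ := by simp [hB]
  have h3 : (∑ u ∈ U, x i u * x j u) * t ^ 2 ≤ ∑ u ∈ U, d i u * d j u := by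
    rw [Finset.sum_mul]
    apply Finset.sum_le_sum
    intro u _
    by_cases c1 : t ≤ d i u
    · by_cases c2 : t ≤ d j u
      · simp only [hx, c1, c2, if_true]; nlinarith
      · simp only [hx, c2, if_false]; have := mul_nonneg (hd0 i u) (hd0 j u); simpa using this
    · simp only [hx, c1, if_false]; have := mul_nonneg (hd0 i u) (hd0 j u); simpa using this
  have h4 : (n : ℝ) / (60 * r ^ 2) * t ^ 2 < (∑ u ∈ U, x i u * x j u) * t ^ 2 :=
    mul_lt_mul_of_pos_right hlt (by positivity)
  have h5 : (n : ℝ) / (60 * r ^ 2) * t ^ 2 = 1.35 * (k * (k * (n * q ^ 2 / (10 ^ 4 * r ^ 4)))) := by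
    rw [ht]; field_simp; norm_num
  have h6 : (0 : ℝ) < k * (k * (n * q ^ 2 / (10 ^ 4 * r ^ 4))) := by positivity
  linarith

def Nr {n r : ℕ} (ω : Sym2 (Fin n) → Bool) (c : Sym2 (Fin n) → Fin r) (i : Fin r)
    (w u : Fin n) : Prop := ω s(w, u) = true ∧ c s(w, u) = i

open Classical in
noncomputable def CN {n r : ℕ} (W : Finset (Fin n)) (ω : Sym2 (Fin n) → Bool)
    (c : Sym2 (Fin n) → Fin r) (i : Fin r) (w w' : Fin n) : Finset (Fin n) :=
  Wᶜ.filter (fun u => Nr ω c i w u ∧ Nr ω c i w' u)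

theorem CN_comm {n r : ℕ} (W : Finset (Fin n)) (ω : Sym2 (Fin n) → Bool)
    (c : Sym2 (Fin n) → Fin r) (i : Fin r) (w w' : Fin n) : CN W ω c i w w' = CN W ω c i w' w := by
  unfold CN
  congr 1
  ext u
  exact and_comm

def HG {n r : ℕ} (q : ℝ) (W : Finset (Fin n)) (ω : Sym2 (Fin n) → Bool)
    (c : Sym2 (Fin n) → Fin r) (i : Fin r) : SimpleGraph (Fin n) where
  Adj w w' := w ≠ w' ∧ n * q ^ 2 / (10 ^ 4 * r ^ 4) ≤ ((CN W ω c i w w').card : ℝ)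
  symm := ⟨by
    intro a b h
    rw [CN_comm]
    exact ⟨h.1.symm, h.2⟩⟩
  loopless := ⟨fun a h => h.1 rfl⟩

open Classical in
theorem majority {n r : ℕ} (hr : 2 ≤ r) {q : ℝ} {W : Finset (Fin n)} {ω : Sym2 (Fin n) → Bool}
    (hA : PropA q W ω) (c : Sym2 (Fin n) → Fin r) (w : Fin n) (hw : w ∈ W) :
    ∃ i : Fin r, 0.69 * n * q / r ≤ ((Wᶜ.filter (fun u => Nr ω c i w u)).card : ℝ) := by
  by_contra hcon
  push Not at hcon
  have h1 := hA w hw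
  have hr' : (2 : ℝ) ≤ r := by exact_mod_cast hr
  have h2 : cnt Wᶜ (fun u => {s(w, u)}) ω =
      ∑ i : Fin r, (Wᶜ.filter (fun u => Nr ω c i w u)).card := by
    unfold cnt
    rw [Finset.card_eq_sum_card_fiberwise (f := fun u => c s(w, u)) (t := Finset.univ)
      (fun _ _ => by simp)]
    apply Finset.sum_congr rfl
    intro i _
    rw [Finset.filter_filter]
    congr 1
    ext u
    rw [Finset.mem_filter, Finset.mem_filter]
    simp [Nr]
  have h3 : (∑ i : Fin r, ((Wᶜ.filter (fun u => Nr ω c i w u)).card : ℝ)) ≤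
      ∑ i : Fin r, (0.69 * n * q / r : ℝ) := Finset.sum_le_sum (fun i _ => (hcon i).le)
  have h4 : ∑ i : Fin r, (0.69 * n * q / r : ℝ) = 0.69 * n * q := by
    rw [Finset.sum_const]; simp; field_simp
  rw [h2] at h1
  push_cast at h1
  linarith

open Classical in
theorem nosep {n r k : ℕ} (hr : 2 ≤ r) (hn : 0 < n) (hk : 0 < k) {q : ℝ} (hq : 0 < q)
    {W : Finset (Fin n)} {ω : Sym2 (Fin n) → Bool} (hB : PropB r k q W ω)
    (c : Sym2 (Fin n) → Fin r) (i : Fin r) (W' : Finset (Fin n)) (hW' : W' ⊆ W)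
    (hdeg : ∀ w ∈ W', 0.69 * n * q / r ≤ ((Wᶜ.filter (fun u => Nr ω c i w u)).card : ℝ)) :
    NoSep (HG q W ω c i) k (3 * r + 1) W' := by
  rintro ⟨B, hB1, hB2⟩
  obtain ⟨j, j', hjj, a, ha, b, hb, h⟩ := sep_core hr hn hk hq Wᶜ
    (by simpa using Finset.card_le_univ (Wᶜ))
    (fun w u => if Nr ω c i w u then 1 else 0) (fun a u => by split_ifs <;> norm_num) B
    (fun j => (hB1 j).2) (by
      intro j a ha
      have := hdeg a ((hB1 j).1 ha)
      simpa using this) (by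
      intro j X hX hXc
      refine lt_of_le_of_lt ?_ (hB (B j) X ((hB1 j).1.trans hW') (hB1 j).2 hX hXc)
      unfold cnt
      rw [← Finset.sum_product', ← Finset.sum_filter, Finset.sum_const, nsmul_eq_mul, mul_one]
      norm_cast
      apply Finset.card_le_card
      intro z hz
      rw [Finset.mem_filter] at hz ⊢
      exact ⟨hz.1, by simpa using hz.2.1⟩)
  obtain ⟨hd, hna⟩ := hB2 j j' hjj
  apply hna a ha b hb
  refine ⟨fun e => Finset.disjoint_left.1 hd ha (e ▸ hb), h.trans (le_of_eq ?_)⟩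
  unfold CN
  rw [Finset.card_filter]
  push_cast
  apply Finset.sum_congr rfl
  intro u _
  by_cases h1 : Nr ω c i a u <;> by_cases h2 : Nr ω c i b u <;> simp [h1, h2]

open Classical in
theorem lists {n r k : ℕ} (hr : 2 ≤ r) (hn : 0 < n) (hk : 0 < k) {q : ℝ} (hq : 0 < q)
    {W : Finset (Fin n)} {ω : Sym2 (Fin n) → Bool} (hA : PropA q W ω) (hB : PropB r k q W ω)
    (c : Sym2 (Fin n) → Fin r) :
    ∃ 𝕃 : Finset (List (Fin n)), 𝕃.card ≤ 3 * r ^ 2 ∧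
      (∀ l ∈ 𝕃, l.Nodup ∧ (∀ x ∈ l, x ∈ W) ∧ ∃ i, IsCyc (HG q W ω c i) l) ∧
      (∀ l ∈ 𝕃, ∀ l' ∈ 𝕃, l ≠ l' → ∀ x ∈ l, x ∉ l') ∧
      (W.filter (fun x => ∀ l ∈ 𝕃, x ∉ l)).card ≤ r * (2 * k * (3 * r + 1)) := by
  have hr0 : 0 < r := by omega
  have hm : ∀ w, ∃ i : Fin r, w ∈ W →
      0.69 * n * q / r ≤ ((Wᶜ.filter (fun u => Nr ω c i w u)).card : ℝ) := by
    intro w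
    by_cases hw : w ∈ W
    · obtain ⟨i, hi⟩ := majority hr hA c w hw
      exact ⟨i, fun _ => hi⟩
    · exact ⟨⟨0, hr0⟩, fun h => absurd h hw⟩
  choose col hcol using hm
  have hL : ∀ i : Fin r, ∃ L : List (List (Fin n)), L.length ≤ 3 * r ∧ L.flatten.Nodup ∧
      (∀ x ∈ L.flatten, x ∈ W.filter (fun w => col w = i)) ∧
      (∀ l ∈ L, IsCyc (HG q W ω c i) l) ∧
      (W.filter (fun w => col w = i) \ L.flatten.toFinset).card ≤ 2 * k * (3 * r + 1) := by
    intro i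
    obtain ⟨L, h1, h2, h3, h4, h5⟩ := aux_cycles (HG q W ω c i) k hk (3 * r)
      (W.filter (fun w => col w = i))
      (nosep hr hn hk hq hB c i _ (Finset.filter_subset _ _) (by
        intro w hw
        rw [Finset.mem_filter] at hw
        rw [← hw.2]
        exact hcol w hw.1))
    refine ⟨L, h1, h2, h3, h4, ?_⟩
    convert h5
  choose L h1 h2 h3 h4 h5 using hL
  have hmem : ∀ l, l ∈ Finset.univ.biUnion (fun i => (L i).toFinset) ↔ ∃ i, l ∈ L i := by
    intro l; simp
  refine ⟨Finset.univ.biUnion (fun i => (L i).toFinset), ?_, ?_, ?_, ?_⟩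
  · calc _ ≤ ∑ i : Fin r, (L i).toFinset.card := Finset.card_biUnion_le
      _ ≤ ∑ i : Fin r, 3 * r := Finset.sum_le_sum (fun i _ =>
          (List.toFinset_card_le _).trans (h1 i))
      _ = 3 * r ^ 2 := by simp; ring
  · intro l hl
    obtain ⟨i, hi⟩ := (hmem l).1 hl
    refine ⟨(List.nodup_flatten.1 (h2 i)).1 l hi, ?_, i, h4 i l hi⟩
    intro x hx
    exact (Finset.mem_filter.1 (h3 i x (List.mem_flatten.2 ⟨l, hi, hx⟩))).1
  · intro l hl l' hl' hne x hx hx'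
    obtain ⟨i, hi⟩ := (hmem l).1 hl
    obtain ⟨j, hj⟩ := (hmem l').1 hl'
    have e1 := (Finset.mem_filter.1 (h3 i x (List.mem_flatten.2 ⟨l, hi, hx⟩))).2
    have e2 := (Finset.mem_filter.1 (h3 j x (List.mem_flatten.2 ⟨l', hj, hx'⟩))).2
    have hij : i = j := e1.symm.trans e2
    subst hij
    have := (List.nodup_flatten.1 (h2 i)).2
    have hS : Std.Symm (List.Disjoint (α := Fin n)) := ⟨fun _ _ h => List.Disjoint.symm h⟩
    have := this.forall hi hj hne
    exact this hx hx'
  · calc _ ≤ (Finset.univ.biUnion (fun i : Fin r =>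
          W.filter (fun w => col w = i) \ (L i).flatten.toFinset)).card := by
          apply Finset.card_le_card
          intro x hx
          rw [Finset.mem_filter] at hx
          rw [Finset.mem_biUnion]
          refine ⟨col x, Finset.mem_univ _, ?_⟩
          rw [Finset.mem_sdiff, Finset.mem_filter]
          refine ⟨⟨hx.1, rfl⟩, ?_⟩
          intro h
          rw [List.mem_toFinset, List.mem_flatten] at h
          obtain ⟨l, hl, hxl⟩ := h
          exact hx.2 l ((hmem l).2 ⟨_, hl⟩) hxl
      _ ≤ ∑ i : Fin r, (W.filter (fun w => col w = i) \ (L i).flatten.toFinset).card :=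
          Finset.card_biUnion_le
      _ ≤ ∑ i : Fin r, 2 * k * (3 * r + 1) := Finset.sum_le_sum (fun i _ => h5 i)
      _ = _ := by simp

open Classical in
theorem det_main {n r k : ℕ} (hr : 2 ≤ r) (hn : 0 < n) (hk : 0 < k) {q : ℝ} (hq : 0 < q)
    {W : Finset (Fin n)} {ω : Sym2 (Fin n) → Bool} (hA : PropA q W ω) (hB : PropB r k q W ω)
    (hC : PropC r q W ω) (c : Sym2 (Fin n) → Fin r) :
    ∃ 𝒞 : Finset (Set (Fin n)), 𝒞.card ≤ 3 * r ^ 2 ∧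
      (𝒞 : Set (Set (Fin n))).Pairwise Disjoint ∧
      (∀ S ∈ 𝒞, ∃ i, IsMonoCycle (graphOf ω) c i S) ∧
      ((W : Set (Fin n)) \ ⋃₀ (𝒞 : Set (Set (Fin n)))).ncard ≤ r * (2 * k * (3 * r + 1)) := by
  obtain ⟨𝕃, hcard, hl, hdisj, hunc⟩ := lists hr hn hk hq hA hB c
  have hr0 : 0 < r := by omega
  have hic : ∀ l : List (Fin n), ∃ i, l ∈ 𝕃 → IsCyc (HG q W ω c i) l := by
    intro l
    by_cases h : l ∈ 𝕃
    · obtain ⟨i, hi⟩ := (hl l h).2.2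
      exact ⟨i, fun _ => hi⟩
    · exact ⟨⟨0, hr0⟩, fun h' => absurd h' h⟩
  choose ic hic using hic
  set C : Finset (Fin n) := Finset.univ.filter (fun w => ∃ l ∈ 𝕃, 3 ≤ l.length ∧ w ∈ l) with hCdef
  have hCm : ∀ w, w ∈ C ↔ ∃ l ∈ 𝕃, 3 ≤ l.length ∧ w ∈ l := by intro w; simp [hCdef]
  have hlw : ∀ w, ∃ l : List (Fin n), w ∈ C → l ∈ 𝕃 ∧ 3 ≤ l.length ∧ w ∈ l := by
    intro w
    by_cases h : w ∈ C
    · obtain ⟨l, hl⟩ := (hCm w).1 h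
      exact ⟨l, fun _ => hl⟩
    · exact ⟨[], fun h' => absurd h' h⟩
  choose lw hlw using hlw
  have huniq : ∀ l ∈ 𝕃, ∀ l' ∈ 𝕃, ∀ x, x ∈ l → x ∈ l' → l = l' := by
    intro l h l' h' x hx hx'
    by_contra hne
    exact hdisj l h l' h' hne x hx hx'
  set τ : Fin n → Fin n := fun w => (lw w).formPerm w with hτ
  have hτm : ∀ w ∈ C, τ w ∈ lw w := fun w hw =>
    List.formPerm_apply_mem_of_mem (hlw w hw).2.2
  have hadj : ∀ w ∈ C, (HG q W ω c (ic (lw w))).Adj w (τ w) := by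
    intro w hw
    obtain ⟨h1, h2, h3⟩ := hlw w hw
    rcases hic _ h1 with h | ⟨_, h4, h5⟩
    · omega
    · exact cyc_formPerm _ _ (hl _ h1).1 h4 h5 w h3
  have hCN : ∀ w ∈ C, ∀ u ∈ CN W ω c (ic (lw w)) w (τ w),
      u ∈ Wᶜ ∧ Nr ω c (ic (lw w)) w u ∧ Nr ω c (ic (lw w)) (τ w) u := by
    intro w _ u hu
    unfold CN at hu
    exact Finset.mem_filter.1 hu
  obtain ⟨g, hgi, hgm⟩ := hall_conn hC C τ (by
      intro x hx y hy hxy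
      have h1 := hτm x hx
      have h2 := hτm y hy
      rw [← hxy] at h2
      have h3 := huniq _ (hlw x hx).1 _ (hlw y hy).1 _ h1 h2
      simp only [hτ, h3] at hxy
      exact (lw y).formPerm.injective hxy)
    (fun w hw => (hadj w hw).1.symm)
    (fun w hw => (hl _ (hlw w hw).1).2.1 w (hlw w hw).2.2)
    (fun w hw => (hl _ (hlw w hw).1).2.1 _ (hτm w hw))
    (fun w => CN W ω c (ic (lw w)) w (τ w))
    (fun w hw u hu => ⟨(hCN w hw u hu).1, (hCN w hw u hu).2.1.1, (hCN w hw u hu).2.2.1⟩)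
    (fun w hw => (hadj w hw).2)
  have hgN := fun w hw => hCN w hw (g w) (hgm w hw)
  set F : List (Fin n) → List (Fin n) := fun l =>
    if 3 ≤ l.length then l.flatMap (fun w => [w, g w]) else l with hF
  have hFsub : ∀ l, ∀ x ∈ l, x ∈ F l := by
    intro l x hx
    simp only [hF]
    split_ifs
    · rw [List.mem_flatMap]; exact ⟨x, hx, by simp⟩
    · exact hx
  have hFm : ∀ l ∈ 𝕃, ∀ x ∈ F l, x ∈ l ∨ ∃ w ∈ l, w ∈ C ∧ x = g w := by
    intro l hl' x hx
    simp only [hF] at hx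
    split_ifs at hx with h3
    · rw [List.mem_flatMap] at hx
      obtain ⟨w, hw, hx⟩ := hx
      simp only [List.mem_cons, List.not_mem_nil, or_false] at hx
      rcases hx with rfl | rfl
      · exact Or.inl hw
      · exact Or.inr ⟨w, hw, (hCm w).2 ⟨l, hl', h3, hw⟩, rfl⟩
    · exact Or.inl hx
  have hgW : ∀ w ∈ C, g w ∉ W := fun w hw => Finset.mem_compl.1 (hgN w hw).1
  refine ⟨𝕃.image (fun l => {x | x ∈ F l}), Finset.card_image_le.trans hcard, ?_, ?_, ?_⟩
  · intro S hS S' hS' hne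
    rw [Finset.mem_coe, Finset.mem_image] at hS hS'
    obtain ⟨l, h, rfl⟩ := hS
    obtain ⟨l', h', rfl⟩ := hS'
    have hll : l ≠ l' := by rintro rfl; exact hne rfl
    rw [Set.disjoint_left]
    intro x hx hx'
    rcases hFm l h x hx with a | ⟨w, hw, hwC, rfl⟩ <;>
      rcases hFm l' h' _ hx' with b | ⟨w', hw', hwC', hb⟩
    · exact hdisj l h l' h' hll x a b
    · exact hgW w' hwC' (hb ▸ (hl l h).2.1 x a)
    · exact hgW w hwC ((hl l' h').2.1 _ b)
    · have := hgi hwC hwC' hb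
      subst this
      exact hdisj l h l' h' hll w hw hw'
  · intro S hS
    rw [Finset.mem_image] at hS
    obtain ⟨l, h, rfl⟩ := hS
    refine ⟨ic l, ?_⟩
    have hnd := (hl l h).1
    rcases hic l h with h1 | ⟨h3, _, _⟩
    · obtain ⟨v, rfl⟩ := List.length_eq_one_iff.1 h1
      left
      exact ⟨v, by ext x; simp [hF]⟩
    · have hFl : F l = l.flatMap (fun w => [w, g w]) := by simp only [hF, h3, if_true]
      have hlC : ∀ w ∈ l, w ∈ C := fun w hw => (hCm w).2 ⟨l, h, h3, hw⟩
      have hlwl : ∀ w ∈ l, lw w = l := fun w hw =>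
        huniq _ (hlw w (hlC w hw)).1 _ h w (hlw w (hlC w hw)).2.2 hw
      have hadjG : ∀ a ∈ W, ∀ b, b ∉ W → Nr ω c (ic l) a b →
          ((graphOf ω).Adj a b ∧ c s(a, b) = ic l) := by
        intro a ha b hb hN
        refine ⟨?_, hN.2⟩
        unfold graphOf
        rw [SimpleGraph.fromRel_adj]
        exact ⟨fun e => hb (e ▸ ha), Or.inl hN.1⟩
      have hR1 : ∀ w ∈ l, (graphOf ω).Adj w (g w) ∧ c s(w, g w) = ic l := by
        intro w hw
        have := (hgN w (hlC w hw)).2.1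
        rw [hlwl w hw] at this
        exact hadjG w ((hl l h).2.1 w hw) _ (hgW w (hlC w hw)) this
      have hR2 : ∀ w ∈ l, (graphOf ω).Adj (g w) (l.formPerm w) ∧
          c s(g w, l.formPerm w) = ic l := by
        intro w hw
        have := (hgN w (hlC w hw)).2.2
        simp only [hτ] at this
        rw [hlwl w hw] at this
        have hm : l.formPerm w ∈ l := List.formPerm_apply_mem_of_mem hw
        have := hadjG _ ((hl l h).2.1 _ hm) _ (hgW w (hlC w hw)) this
        exact ⟨this.1.symm, by rw [Sym2.eq_swap]; exact this.2⟩
      obtain ⟨hch, hcl⟩ := formPerm_cyc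
        (fun a b => (graphOf ω).Adj (g a) b ∧ c s(g a, b) = ic l) l hnd hR2
      rw [hFl]
      apply mono_of_list
      · rw [flat_length]; omega
      · rw [List.nodup_flatMap]
        constructor
        · intro w hw
          have : w ≠ g w := (hR1 w hw).1.ne
          simpa using this
        · refine List.Pairwise.imp_of_mem ?_ hnd
          intro a b ha hb hab
          have e1 : a ≠ g b := fun e => hgW b (hlC b hb) (e ▸ (hl l h).2.1 a ha)
          have e2 : b ≠ g a := fun e => hgW a (hlC a ha) (e ▸ (hl l h).2.1 b hb)
          have e3 : g a ≠ g b := fun e => hab (hgi (hlC a ha) (hlC b hb) e)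
          intro x hx hy
          simp only [List.mem_cons, List.not_mem_nil, or_false] at hx hy
          rcases hx with rfl | rfl <;> rcases hy with hy | hy
          · exact hab hy
          · exact e1 hy
          · exact e2 hy.symm
          · exact e3 hy
      · exact chain_flat (fun a b => (graphOf ω).Adj a b ∧ c s(a, b) = ic l) g l hR1 hch
      · intro x hx y hy
        rw [flat_getLast] at hx
        rw [flat_head] at hy
        rw [Option.mem_def, Option.map_eq_some_iff] at hx
        obtain ⟨a, ha, rfl⟩ := hx
        exact hcl a ha y hy
  · refine le_trans ?_ hunc
    rw [← Set.ncard_coe_finset]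
    apply Set.ncard_le_ncard _ (Finset.finite_toSet _)
    rintro x ⟨hx, hx'⟩
    rw [Finset.mem_coe, Finset.mem_filter]
    refine ⟨hx, fun l h hxl => hx' ?_⟩
    rw [Set.mem_sUnion]
    exact ⟨_, Finset.mem_coe.2 (Finset.mem_image_of_mem _ h), hFsub l x hxl⟩

theorem fail_bound {n r k : ℕ} (hr : 2 ≤ r) (hn : 2 ≤ n) {q : ℝ} (h0 : 0 ≤ q) (h1 : q ≤ 1)
    (W : Finset (Fin n)) (hW : (W.card : ℝ) ≤ (n : ℝ) / (100 * r : ℝ) ^ 4)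
    (hq : 2 * 10 ^ 5 * r ^ 4 * Real.log n ≤ n * q ^ 2) (hk : 200 * r ≤ k * q)
    (T : Set (Sym2 (Fin n) → Bool))
    (hT : ∀ ω, PropA q W ω → PropB r k q W ω → PropC r q W ω → ω ∈ T) :
    ENNReal.ofReal (1 - (1 / n + Real.exp (-n) + Real.exp 2 / n)) ≤ gnp n q T := by
  have := gnp_prob (n := n) h0 h1
  have hsub : Tᶜ ⊆ ({ω | ¬ PropA q W ω} ∪ {ω | ¬ PropB r k q W ω}) ∪ {ω | ¬ PropC r q W ω} := by
    intro ω hω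
    by_contra hcon
    simp only [Set.mem_union, Set.mem_ofPred_eq, not_or, not_not] at hcon
    exact hω (hT ω hcon.1.1 hcon.1.2 hcon.2)
  have hb : (gnp n q).real Tᶜ ≤ 1 / n + Real.exp (-n) + Real.exp 2 / n := by
    calc _ ≤ _ := measureReal_mono hsub (measure_ne_top _ _)
      _ ≤ _ := measureReal_union_le _ _
      _ ≤ _ := add_le_add (measureReal_union_le _ _) le_rfl
      _ ≤ _ := add_le_add (add_le_add (probA hr hn h0 h1 W hW hq) (probB hr h0 h1 W hk))
        (probC hr hn h0 h1 W hW hq)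
  have hc : (gnp n q).real Tᶜ = 1 - (gnp n q).real T := by
    rw [probReal_compl_eq_one_sub (gnp_meas T)]
  rw [← ofReal_measureReal (measure_ne_top _ _)]
  apply ENNReal.ofReal_le_ofReal
  linarith

/-- For every integer `r ≥ 2` there is a constant `K = K(r) > 0` such that:
for fixed sets `W = W(n) ⊆ [n]` of at most `n/(100r)^4` vertices and `p = p(n) ≫ (log n/n)^{1/2}`,
w.h.p. for every `r`-coloring of the edges of `G ~ G(n,p)` there is a collection of (at most)
`3r^2` vertex-disjoint monochromatic cycles covering all but at most `K/p` vertices of `W`. -/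
theorem stmt1 (r : ℕ) (hr : 2 ≤ r) :
    ∃ K : ℝ, 0 < K ∧
      ∀ (p : ℕ → ℝ), (∀ n, 0 ≤ p n) → (∀ n, p n ≤ 1) →
        Tendsto (fun n : ℕ => p n / Real.sqrt (Real.log n / n)) atTop atTop →
        ∀ (W : (n : ℕ) → Finset (Fin n)),
          (∀ n : ℕ, ((W n).card : ℝ) ≤ (n : ℝ) / (100 * r : ℝ) ^ 4) →
          Tendsto (fun n => gnp n (p n)
            {ω | ∀ c : Sym2 (Fin n) → Fin r,
              ∃ 𝒞 : Finset (Set (Fin n)),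
                𝒞.card ≤ 3 * r ^ 2 ∧
                (𝒞 : Set (Set (Fin n))).Pairwise Disjoint ∧
                (∀ S ∈ 𝒞, ∃ i, IsMonoCycle (graphOf ω) c i S) ∧
                ((((W n : Set (Fin n)) \ ⋃₀ (𝒞 : Set (Set (Fin n)))).ncard : ℝ) ≤ K / p n)})
            atTop (nhds 1) := by
  have hr' : (2 : ℝ) ≤ r := by exact_mod_cast hr
  refine ⟨402 * r ^ 2 * (3 * r + 1), by positivity, ?_⟩
  intro p hp0 hp1 hp W hW
  have hlow : Tendsto (fun n : ℕ =>
      ENNReal.ofReal (1 - (1 / (n : ℝ) + Real.exp (-(n : ℝ)) + Real.exp 2 / n))) atTop (nhds 1) := by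
    have t1 : Tendsto (fun n : ℕ => 1 / (n : ℝ)) atTop (nhds 0) := tendsto_const_div_atTop_nhds_zero_nat 1
    have t2 : Tendsto (fun n : ℕ => Real.exp (-(n : ℝ))) atTop (nhds 0) :=
      Real.tendsto_exp_neg_atTop_nhds_zero.comp tendsto_natCast_atTop_atTop
    have t3 : Tendsto (fun n : ℕ => Real.exp 2 / (n : ℝ)) atTop (nhds 0) :=
      tendsto_const_div_atTop_nhds_zero_nat _
    have t4 := ENNReal.tendsto_ofReal (((t1.add t2).add t3).const_sub 1)
    simpa using t4
  refine tendsto_of_tendsto_of_tendsto_of_le_of_le' hlow tendsto_const_nhds ?_ ?_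
  · filter_upwards [hp.eventually_ge_atTop (1000 * r ^ 2), eventually_ge_atTop 2] with n hn hn2
    have hn2' : (2 : ℝ) ≤ n := by exact_mod_cast hn2
    have hlog : 0 < Real.log n := Real.log_pos (by linarith)
    have hdiv : 0 < Real.log n / n := by positivity
    have hs : 0 < Real.sqrt (Real.log n / n) := Real.sqrt_pos.2 hdiv
    rw [le_div_iff₀ hs] at hn
    have hppos : 0 < p n := lt_of_lt_of_le (by positivity) hn
    have hsq : (1000 * r ^ 2 * Real.sqrt (Real.log n / n)) ^ 2 ≤ p n ^ 2 :=
      pow_le_pow_left₀ (by positivity) hn 2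
    rw [mul_pow, Real.sq_sqrt hdiv.le] at hsq
    have hq : 2 * 10 ^ 5 * r ^ 4 * Real.log n ≤ n * p n ^ 2 := by
      have e : (n : ℝ) * ((1000 * (r : ℝ) ^ 2) ^ 2 * (Real.log n / n)) =
          10 ^ 6 * r ^ 4 * Real.log n := by field_simp; ring
      have e2 : (n : ℝ) * ((1000 * (r : ℝ) ^ 2) ^ 2 * (Real.log n / n)) ≤ n * p n ^ 2 :=
        mul_le_mul_of_nonneg_left hsq (by positivity)
      rw [e] at e2
      have e3 : 0 < (r : ℝ) ^ 4 * Real.log n := by positivity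
      nlinarith
    set k : ℕ := ⌈200 * r / p n⌉₊ with hkdef
    have hk1 : 200 * r / p n ≤ k := Nat.le_ceil _
    have hk : 200 * r ≤ k * p n := by rwa [div_le_iff₀ hppos] at hk1
    have hk0 : 0 < k := Nat.ceil_pos.2 (by positivity)
    have hk2 : (k : ℝ) * p n ≤ 201 * r := by
      have : (k : ℝ) < 200 * r / p n + 1 := Nat.ceil_lt_add_one (by positivity)
      have h2 : (k : ℝ) * p n ≤ (200 * r / p n + 1) * p n :=
        mul_le_mul_of_nonneg_right this.le hppos.le
      have h3 : (200 * r / p n + 1) * p n = 200 * r + p n := by field_simp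
      have := hp1 n
      linarith
    apply fail_bound hr hn2 (hp0 n) (hp1 n) (W n) (hW n) hq hk
    intro ω hA hB hC c
    obtain ⟨𝒞, g1, g2, g3, g4⟩ := det_main hr (by omega) hk0 hppos hA hB hC c
    refine ⟨𝒞, g1, g2, g3, ?_⟩
    rw [le_div_iff₀ hppos]
    have g5 : ((((W n : Set (Fin n)) \ ⋃₀ (𝒞 : Set (Set (Fin n)))).ncard : ℝ)) ≤
        r * (2 * k * (3 * r + 1)) := by exact_mod_cast g4
    calc _ ≤ (r * (2 * k * (3 * r + 1))) * p n := mul_le_mul_of_nonneg_right g5 hppos.le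
      _ = (2 * r * (3 * r + 1)) * (k * p n) := by ring
      _ ≤ (2 * r * (3 * r + 1)) * (201 * r) := mul_le_mul_of_nonneg_left hk2 (by positivity)
      _ = _ := by ring
  · filter_upwards with n
    have := gnp_prob (n := n) (hp0 n) (hp1 n)
    exact prob_le_one
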